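/- arXiv:1812.11534 — 3 statements merged into one kernel-verified Lean document; each statement's English description precedes it below -/
import Mathlib

section
/- Let F = {f₁,…,f_s, f_{s+1},…,f_{s+k}} ⊂ ℂ[x₁,…,xₙ] with k ≥ 1, and let p ∈ ℂⁿ satisfy f_i(p) = 0 for all i and rank(J(F)(p)) = s. Assume the Krull dimension of ℂ[x₁,…,xₙ]/⟨F⟩ is at most n − s − 1 and that m = max_i deg(f_i) > 1. Then there exist polynomials f′₁,…,f′_s, f′_{s+1} ∈ Δ_p(F) such that rank(J(f′₁,…,f′_{s+1})(p)) = s + 1 and max_j deg(f′_j) ≤ m. -/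
open MvPolynomial

/-- The rank over ℂ of the Jacobian matrix of a finite polynomial system, evaluated at `p`. -/
noncomputable def jacRank {n : ℕ} {ι : Type*} [Fintype ι]
    (g : ι → MvPolynomial (Fin n) ℂ) (p : Fin n → ℂ) : ℕ :=
  (Matrix.of fun (i : ι) (j : Fin n) => eval p (pderiv j (g i))).rank

open MvPolynomial

/-- `DeltaSet F p` is the smallest set `Δ_p(F)` of polynomials such that
(1) `F ⊆ Δ_p(F)`;
(2) `a • h ∈ Δ_p(F)` for every `h ∈ Δ_p(F)` and every nonzero scalar `a ∈ ℂ`;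
(3) `h₁ + h₂ ∈ Δ_p(F)` for all `h₁, h₂ ∈ Δ_p(F)` with `h₁(p) + h₂(p) = 0`;
(4) `∂h/∂x_i ∈ Δ_p(F)` for every `h ∈ Δ_p(F)` and index `i` with `(∂h/∂x_i)(p) = 0`. -/
inductive DeltaSet {n : ℕ} (F : Set (MvPolynomial (Fin n) ℂ)) (p : Fin n → ℂ) :
    MvPolynomial (Fin n) ℂ → Prop
  | base {f : MvPolynomial (Fin n) ℂ} (hf : f ∈ F) : DeltaSet F p f
  | smul {h : MvPolynomial (Fin n) ℂ} (a : ℂ) (ha : a ≠ 0) (hh : DeltaSet F p h) :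
      DeltaSet F p (C a * h)
  | add {h₁ h₂ : MvPolynomial (Fin n) ℂ} (hh₁ : DeltaSet F p h₁) (hh₂ : DeltaSet F p h₂)
      (hsum : eval p h₁ + eval p h₂ = 0) : DeltaSet F p (h₁ + h₂)
  | deriv {h : MvPolynomial (Fin n) ℂ} (i : Fin n) (hh : DeltaSet F p h)
      (hz : eval p (pderiv i h) = 0) : DeltaSet F p (pderiv i h)



theorem dim_ge_of_integral {R S : Type*} [CommRing R] [CommRing S] [IsDomain R] [Algebra R S]
    [Algebra.IsIntegral R S] (hinj : Function.Injective (algebraMap R S)) :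
    ringKrullDim R ≤ ringKrullDim S := by
  have : FaithfulSMul R S := (faithfulSMul_iff_algebraMap_injective R S).2 hinj
  refine iSup_le fun l => ?_
  have : l.head.asIdeal.IsPrime := l.head.2
  obtain ⟨Q, -, hQ, hQ'⟩ := Ideal.exists_ideal_over_prime_of_isIntegral (S := S)
    l.head.asIdeal ⊥ (by rw [Ideal.comap_bot_of_injective _ hinj]; exact bot_le)
  have : Q.LiesOver l.head.asIdeal := ⟨hQ'.symm⟩
  obtain ⟨L, hL, -⟩ := Ideal.exists_ltSeries_of_hasGoingUp l Q
  rw [← hL]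
  exact Order.LTSeries.length_le_krullDim L

theorem dim_ge_of_algInd {B : Type} [CommRing B] [IsDomain B] [Algebra ℂ B]
    [Algebra.FiniteType ℂ B] {d : ℕ} (x : Fin d → B) (hx : AlgebraicIndependent ℂ x) :
    (d : WithBot ℕ∞) ≤ ringKrullDim B := by
  obtain ⟨e, g, hg, hint⟩ := exists_integral_inj_algHom_of_fg ℂ B
  algebraize [g.toRingHom]
  have : IsScalarTower ℂ (MvPolynomial (Fin e) ℂ) B := by
    refine IsScalarTower.of_algebraMap_eq fun c => ?_
    exact (g.commutes c).symm
  have hinj : Function.Injective (algebraMap (MvPolynomial (Fin e) ℂ) B) := hg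
  have : FaithfulSMul (MvPolynomial (Fin e) ℂ) B :=
    (faithfulSMul_iff_algebraMap_injective _ _).2 hinj
  have h1 := dim_ge_of_integral hinj
  have h2 : Algebra.trdeg ℂ (MvPolynomial (Fin e) ℂ) + Algebra.trdeg (MvPolynomial (Fin e) ℂ) B =
    Algebra.trdeg ℂ B := trdeg_add_eq _ _
  rw [trdeg_eq_zero (R := MvPolynomial (Fin e) ℂ) (A := B), MvPolynomial.trdeg_of_isDomain] at h2
  have h3 := hx.cardinalMk_le_trdeg
  rw [← h2] at h3
  simp at h3
  refine le_trans ?_ h1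
  simp
  exact_mod_cast h3

theorem dim_ge {n d : ℕ} (I : Ideal (MvPolynomial (Fin n) ℂ))
    (l : Fin d → MvPolynomial (Fin n) ℂ)
    (h : ∀ q : MvPolynomial (Fin d) ℂ, aeval l q ∈ I → q = 0) :
    (d : WithBot ℕ∞) ≤ ringKrullDim (MvPolynomial (Fin n) ℂ ⧸ I) := by
  let φ : MvPolynomial (Fin d) ℂ →ₐ[ℂ] (MvPolynomial (Fin n) ℂ ⧸ I) :=
    (Ideal.Quotient.mkₐ ℂ I).comp (aeval l)
  have hφ : Function.Injective φ.toRingHom := by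
    rw [injective_iff_map_eq_zero]
    intro q hq
    exact h q (Ideal.Quotient.eq_zero_iff_mem.1 hq)
  obtain ⟨P, hP, hP'⟩ := Ideal.exists_comap_eq_of_mem_minimalPrimes_of_injective hφ ⊥
    (by rw [IsDomain.minimalPrimes_eq_singleton_bot]; rfl)
  refine le_trans ?_ (ringKrullDim_quotient_le P)
  refine dim_ge_of_algInd (fun i => Ideal.Quotient.mkₐ ℂ P (φ (X i))) ?_
  rw [AlgebraicIndependent, injective_iff_map_eq_zero]
  intro q hq
  have : (aeval (fun i => Ideal.Quotient.mkₐ ℂ P (φ (X i)))) q = Ideal.Quotient.mkₐ ℂ P (φ q) := by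
    rw [← AlgHom.comp_apply]
    congr 1
    ext i
    simp
  rw [this] at hq
  have h2 : q ∈ P.comap φ.toRingHom := by
    rw [Ideal.mem_comap]
    exact Ideal.Quotient.eq_zero_iff_mem.1 hq
  rw [hP'] at h2
  exact h2


theorem hasFDerivAt_eval {n : ℕ} (h : MvPolynomial (Fin n) ℂ) (x : Fin n → ℂ) :
    HasFDerivAt (fun y : Fin n → ℂ => eval y h)
      (∑ i, eval x (pderiv i h) • (ContinuousLinearMap.proj i : (Fin n → ℂ) →L[ℂ] ℂ)) x := by
  induction h using MvPolynomial.induction_on with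
  | C a => 
    simp only [eval_C]
    refine (hasFDerivAt_const (𝕜 := ℂ) a x).congr_fderiv ?_
    ext v
    simp
  | add p q hp hq =>
    simp only [map_add]
    refine (hp.add hq).congr_fderiv ?_
    ext v
    simp [add_mul, Finset.sum_add_distrib]
  | mul_X p i hp =>
    have h1 := hp.mul (hasFDerivAt_apply (𝕜 := ℂ) i x)
    simp only [map_mul, eval_X]
    refine h1.congr_fderiv ?_
    ext v
    simp [pderiv_X, Pi.single_apply, add_mul, Finset.sum_add_distrib, Finset.mul_sum]
    simp only [apply_ite (eval x), map_zero, ite_mul, zero_mul, Finset.sum_ite_eq,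
      Finset.mem_univ, if_true, mul_assoc]

theorem contDiff_eval {n : ℕ} (h : MvPolynomial (Fin n) ℂ) :
    ContDiff ℂ 1 (fun y : Fin n → ℂ => eval y h) :=
  (AnalyticOnNhd.eval_mvPolynomial (𝕜 := ℂ) h).contDiff

theorem exists_param {n r d t : ℕ} (g : Fin r → MvPolynomial (Fin n) ℂ)
    (l : Fin d → MvPolynomial (Fin n) ℂ) (h : Fin t → MvPolynomial (Fin n) ℂ) (p : Fin n → ℂ)
    (hg : ∀ a, eval p (g a) = 0) (hl : ∀ a, eval p (l a) = 0) (hh : ∀ a, eval p (h a) = 0)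
    (hcard : r + d = n)
    (hli : LinearIndependent ℂ
      (fun (a : Fin r ⊕ Fin d) (i : Fin n) => eval p (pderiv i (Sum.elim g l a))))
    (hM : ∀ b i, ∃ M : Fin t → ℂ, ∀ x, (∀ a, eval x (g a) = 0) →
      eval x (pderiv i (h b)) = ∑ c, M c * eval x (h c)) :
    ∀ᶠ y in nhds (0 : Fin d → ℂ), ∃ x : Fin n → ℂ, (∀ a, eval x (g a) = 0) ∧
      (∀ a, eval x (h a) = 0) ∧ ∀ a, eval x (l a) = y a := by
  choose M hM using hM
  let Φ : (Fin n → ℂ) → (Fin r ⊕ Fin d → ℂ) := fun x a => eval x (Sum.elim g l a)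
  have hΦp : Φ p = 0 := by
    ext a; cases a <;> simp [Φ, hg, hl]
  have hΦc : ContDiffAt ℂ 1 Φ p := by
    rw [contDiffAt_pi]
    exact fun a => (contDiff_eval _).contDiffAt
  let Φ' : (Fin n → ℂ) →L[ℂ] (Fin r ⊕ Fin d → ℂ) := ContinuousLinearMap.pi fun a =>
    ∑ i, eval p (pderiv i (Sum.elim g l a)) • (ContinuousLinearMap.proj i : (Fin n → ℂ) →L[ℂ] ℂ)
  have hΦd : HasFDerivAt Φ Φ' p := by
    rw [hasFDerivAt_pi]
    exact fun a => hasFDerivAt_eval _ _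
  have hsurj : Function.Injective Φ' := by
    let A : Matrix (Fin r ⊕ Fin d) (Fin n) ℂ :=
      Matrix.of fun (a : Fin r ⊕ Fin d) (i : Fin n) => eval p (pderiv i (Sum.elim g l a))
    have e : (Φ' : (Fin n → ℂ) →ₗ[ℂ] (Fin r ⊕ Fin d → ℂ)) = A.mulVecLin := by
      ext v a
      simp [Φ', A, Matrix.mulVec, dotProduct]
    have hr : A.rank = n := by
      rw [LinearIndependent.rank_matrix (M := A) hli]
      simp [hcard]
    have hdim := A.mulVecLin.finrank_range_add_finrank_ker
    have hr' : Module.finrank ℂ A.mulVecLin.range = n := hr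
    rw [hr'] at hdim
    simp at hdim
    have : Function.Injective A.mulVecLin := by
      rw [← LinearMap.ker_eq_bot, hdim]
    rw [← e] at this
    exact this
  let Φe : (Fin n → ℂ) ≃L[ℂ] (Fin r ⊕ Fin d → ℂ) :=
    (LinearEquiv.ofInjectiveOfFinrankEq (Φ' : (Fin n → ℂ) →ₗ[ℂ] (Fin r ⊕ Fin d → ℂ)) hsurj
      (by simp [hcard])).toContinuousLinearEquiv
  have hΦe : HasFDerivAt Φ (Φe : (Fin n → ℂ) →L[ℂ] (Fin r ⊕ Fin d → ℂ)) p := by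
    refine hΦd.congr_fderiv ?_
    ext v a
    rfl
  let ψ := hΦc.localInverse hΦe one_ne_zero
  have hψp : ψ 0 = p := by
    rw [← hΦp]; exact hΦc.localInverse_apply_image hΦe one_ne_zero
  have hψc : ContDiffAt ℂ 1 ψ 0 := by
    rw [← hΦp]; exact hΦc.to_localInverse hΦe one_ne_zero
  have hinv : ∀ᶠ z in nhds 0, Φ (ψ z) = z := by
    rw [← hΦp]
    exact (hΦc.hasStrictFDerivAt' hΦe one_ne_zero).eventually_right_inverse
  have hbd : ∀ᶠ z in nhds 0, ‖fderiv ℂ ψ z‖ < ‖fderiv ℂ ψ 0‖ + 1 :=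
    (hψc.continuousAt_fderiv one_ne_zero).norm.eventually_lt_const (lt_add_one _)
  obtain ⟨ε, hε, hball⟩ := Metric.eventually_nhds_iff_ball.1
    (hinv.and (hbd.and (hψc.eventually (by simp))))
  set C := ‖fderiv ℂ ψ 0‖ + 1 with hC
  have hC0 : 0 ≤ C := by positivity
  filter_upwards [Metric.ball_mem_nhds (0 : Fin d → ℂ) hε] with y hy
  let z₁ : Fin r ⊕ Fin d → ℂ := Sum.elim 0 y
  have hz₁ : ‖z₁‖ < ε := by
    rw [pi_norm_lt_iff hε]
    rintro (a | a)
    · simpa [z₁] using hε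
    · simp only [z₁, Sum.elim_inr]
      exact (norm_le_pi_norm y a).trans_lt (by simpa using hy)
  let z : ℝ → (Fin r ⊕ Fin d → ℂ) := fun τ => τ • z₁
  have hz : ∀ τ ∈ Set.Icc (0 : ℝ) 1, z τ ∈ Metric.ball (0 : Fin r ⊕ Fin d → ℂ) ε := by
    intro τ hτ
    simp only [z, mem_ball_zero_iff, norm_smul, Real.norm_eq_abs, abs_of_nonneg hτ.1]
    nlinarith [norm_nonneg z₁, hτ.2]
  let γ : ℝ → (Fin n → ℂ) := fun τ => ψ (z τ)
  have hγg : ∀ τ ∈ Set.Icc (0 : ℝ) 1, ∀ a, eval (γ τ) (g a) = 0 := by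
    intro τ hτ a
    have := congrFun (hball _ (hz τ hτ)).1 (Sum.inl a)
    simpa [Φ, z, z₁] using this
  have hγd : ∀ τ ∈ Set.Icc (0 : ℝ) 1, HasDerivAt γ (fderiv ℂ ψ (z τ) z₁) τ := by
    intro τ hτ
    have h1 := ((hball _ (hz τ hτ)).2.2.differentiableAt one_ne_zero).hasFDerivAt
    have h2 : HasDerivAt z z₁ τ := by
      simpa using! (hasDerivAt_id τ).smul_const z₁
    exact (h1.restrictScalars ℝ).comp_hasDerivAt τ h2
  let w : ℝ → (Fin t → ℂ) := fun τ b => eval (γ τ) (h b)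
  let w' : ℝ → (Fin t → ℂ) := fun τ b =>
    ∑ i, eval (γ τ) (pderiv i (h b)) * (fderiv ℂ ψ (z τ) z₁) i
  have hw : ∀ τ ∈ Set.Icc (0 : ℝ) 1, HasDerivAt w (w' τ) τ := by
    intro τ hτ
    rw [hasDerivAt_pi]
    intro b
    have := ((hasFDerivAt_eval (h b) (γ τ)).restrictScalars ℝ).comp_hasDerivAt τ (hγd τ hτ)
    simpa [w'] using! this
  have hw0 : w 0 = 0 := by
    ext b
    simp [w, γ, z, hψp, hh]
  have hvb : ∀ τ ∈ Set.Icc (0 : ℝ) 1, ∀ i, ‖(fderiv ℂ ψ (z τ) z₁) i‖ ≤ C * ε := by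
    intro τ hτ i
    refine (norm_le_pi_norm _ i).trans ((ContinuousLinearMap.le_opNorm _ _).trans ?_)
    exact mul_le_mul (hball _ (hz τ hτ)).2.1.le hz₁.le (norm_nonneg _) hC0
  have key : ∀ τ ∈ Set.Icc (0 : ℝ) 1, w τ = 0 := by
    refine eq_zero_of_abs_deriv_le_mul_abs_self_of_eq_zero_right (f' := w')
      (K := ∑ b, ∑ i, ∑ c, ‖M b i c‖ * (C * ε))
      (fun τ hτ => (hw τ hτ).continuousAt.continuousWithinAt)
      (fun τ hτ => (hw τ ⟨hτ.1, hτ.2.le⟩).hasDerivWithinAt) hw0 ?_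
    intro τ hτ
    have hτ' : τ ∈ Set.Icc (0 : ℝ) 1 := ⟨hτ.1, hτ.2.le⟩
    have hK : 0 ≤ C * ε := by positivity
    rw [pi_norm_le_iff_of_nonneg (by positivity)]
    intro b
    have h1 : ‖w' τ b‖ ≤ (∑ i, ∑ c, ‖M b i c‖ * (C * ε)) * ‖w τ‖ := by
      simp only [w']
      rw [Finset.sum_mul]
      refine (norm_sum_le _ _).trans (Finset.sum_le_sum fun i _ => ?_)
      rw [hM b i _ (hγg τ hτ'), Finset.sum_mul, Finset.sum_mul]
      refine (norm_sum_le _ _).trans (Finset.sum_le_sum fun c _ => ?_)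
      rw [norm_mul, norm_mul, mul_assoc, mul_assoc, mul_comm (C * ε)]
      have h3 := hvb τ hτ' i
      have h4 : ‖eval (γ τ) (h c)‖ ≤ ‖w τ‖ := norm_le_pi_norm (w τ) c
      gcongr
    refine h1.trans (mul_le_mul_of_nonneg_right ?_ (norm_nonneg _))
    exact Finset.single_le_sum (f := fun b => ∑ i, ∑ c, ‖M b i c‖ * (C * ε))
      (fun b _ => by positivity) (Finset.mem_univ b)
  have h1 : (1 : ℝ) ∈ Set.Icc (0 : ℝ) 1 := by simp
  refine ⟨γ 1, hγg 1 h1, fun a => congrFun (key 1 h1) a, fun a => ?_⟩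
  have := congrFun (hball _ (hz 1 h1)).1 (Sum.inr a)
  simpa [Φ, γ, z, z₁] using this

/-- The gradient at `p` as a linear map. -/
noncomputable def gradAt {n : ℕ} (p : Fin n → ℂ) :
    MvPolynomial (Fin n) ℂ →ₗ[ℂ] (Fin n → ℂ) where
  toFun h i := eval p (pderiv i h)
  map_add' a b := by ext i; simp
  map_smul' a b := by ext i; simp

theorem DeltaSet.eval_eq_zero {n : ℕ} {F : Set (MvPolynomial (Fin n) ℂ)} {p : Fin n → ℂ}
    (hF : ∀ f ∈ F, eval p f = 0) {h : MvPolynomial (Fin n) ℂ} (hh : DeltaSet F p h) :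
    eval p h = 0 := by
  induction hh with
  | base hf => exact hF _ hf
  | smul a ha hh ih => simp [ih]
  | add h1 h2 hs => simpa using hs
  | deriv i hh hz => exact hz

theorem totalDegree_pderiv_le' {n : ℕ} (i : Fin n) (h : MvPolynomial (Fin n) ℂ) :
    (pderiv i h).totalDegree ≤ h.totalDegree := by
  rw [h.as_sum, map_sum]
  refine (totalDegree_finsetSum _ _).trans (Finset.sup_le fun v hv => ?_)
  rw [← h.as_sum, pderiv_monomial]
  refine (totalDegree_monomial_le _ _).trans ?_
  refine le_trans ?_ (le_totalDegree hv)
  exact Finsupp.degree_mono tsub_le_self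

theorem DeltaSet.totalDegree_le {n m : ℕ} {F : Set (MvPolynomial (Fin n) ℂ)} {p : Fin n → ℂ}
    (hF : ∀ f ∈ F, f.totalDegree ≤ m) {h : MvPolynomial (Fin n) ℂ} (hh : DeltaSet F p h) :
    h.totalDegree ≤ m := by
  induction hh with
  | base hf => exact hF _ hf
  | smul a ha hh ih =>
    rw [← smul_eq_C_mul]
    exact (totalDegree_smul_le _ _).trans ih
  | add h1 h2 hs ih1 ih2 => exact (totalDegree_add _ _).trans (max_le ih1 ih2)
  | deriv i hh hz ih => exact (totalDegree_pderiv_le' _ _).trans ih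

/-- `Δ_p(F)` as a linear subspace. -/
def deltaSub {n : ℕ} (F : Set (MvPolynomial (Fin n) ℂ)) (p : Fin n → ℂ)
    (hF : ∀ f ∈ F, eval p f = 0) (hne : F.Nonempty) :
    Submodule ℂ (MvPolynomial (Fin n) ℂ) where
  carrier := {h | DeltaSet F p h}
  add_mem' {a b} ha hb := DeltaSet.add ha hb (by
    rw [DeltaSet.eval_eq_zero hF ha, DeltaSet.eval_eq_zero hF hb, add_zero])
  zero_mem' := by
    obtain ⟨f, hf⟩ := hne
    have h1 := DeltaSet.base (p := p) hf
    have h2 := DeltaSet.smul (-1) (by simp) h1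
    have h3 := DeltaSet.add h1 h2 (by simp)
    simpa using h3
  smul_mem' c x hx := by
    by_cases hc : c = 0
    · subst hc
      rw [zero_smul]
      have h2 := DeltaSet.smul (-1) (by simp) hx
      have h3 := DeltaSet.add hx h2 (by simp)
      simpa using h3
    · rw [smul_eq_C_mul]
      exact DeltaSet.smul c hc hx

/-- The affine linear form with gradient `u` vanishing at `p`. -/
noncomputable def linForm {n : ℕ} (p u : Fin n → ℂ) : MvPolynomial (Fin n) ℂ :=
  ∑ i, C (u i) * (X i - C (p i))

theorem eval_linForm {n : ℕ} (p u : Fin n → ℂ) : eval p (linForm p u) = 0 := by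
  simp [linForm]

theorem grad_linForm {n : ℕ} (p u : Fin n → ℂ) : gradAt p (linForm p u) = u := by
  ext i
  simp [linForm, gradAt, pderiv_X, Pi.single_apply, apply_ite (eval p)]

theorem eval_aeval_eq {n d : ℕ} (l : Fin d → MvPolynomial (Fin n) ℂ) (x : Fin n → ℂ)
    (q : MvPolynomial (Fin d) ℂ) : eval x (aeval l q) = eval (fun a => eval x (l a)) q := by
  induction q using MvPolynomial.induction_on with
  | C a => simp
  | add p q hp hq => rw [map_add, map_add, map_add, hp, hq]
  | mul_X p i hp => rw [map_mul, map_mul, map_mul, hp, aeval_X, eval_X]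

/-- Let `F = {f₁,…,f_s,f_{s+1},…,f_{s+k}} ⊂ ℂ[x₁,…,xₙ]` with `k ≥ 1`, and
let `p ∈ ℂⁿ` satisfy `fᵢ(p) = 0` for all `i` and `rank J(F)(p) = s`. Assume the Krull
dimension of `ℂ[x]/⟨F⟩` is at most `n − s − 1` (i.e. `< n − s`) and `m = maxᵢ deg fᵢ > 1`.
Then there are polynomials `f′₁,…,f′_{s+1} ∈ Δ_p(F)` with `rank J(f′)(p) = s + 1` and
`maxⱼ deg f′ⱼ ≤ m`. -/
theorem deflation_step_exists {n s k : ℕ} (hk : 1 ≤ k)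
    (f : Fin (s + k) → MvPolynomial (Fin n) ℂ) (p : Fin n → ℂ)
    (hp : ∀ i, eval p (f i) = 0)
    (hrank : jacRank f p = s)
    (hdim : ringKrullDim (MvPolynomial (Fin n) ℂ ⧸ Ideal.span (Set.range f)) <
      ((n - s : ℕ) : WithBot ℕ∞))
    (hm : 1 < Finset.univ.sup fun i => (f i).totalDegree) :
    ∃ f' : Fin (s + 1) → MvPolynomial (Fin n) ℂ,
      (∀ j, DeltaSet (Set.range f) p (f' j)) ∧
      jacRank f' p = s + 1 ∧
      ∀ j, (f' j).totalDegree ≤ Finset.univ.sup fun i => (f i).totalDegree := by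
  classical
  set m := Finset.univ.sup fun i => (f i).totalDegree with hmdef
  have hF : ∀ g ∈ Set.range f, eval p g = 0 := by rintro _ ⟨i, rfl⟩; exact hp i
  have hFm : ∀ g ∈ Set.range f, g.totalDegree ≤ m := by
    rintro _ ⟨i, rfl⟩
    exact Finset.le_sup (f := fun i => (f i).totalDegree) (Finset.mem_univ i)
  have hne : (Set.range f).Nonempty := ⟨f ⟨0, by omega⟩, _, rfl⟩
  set L := deltaSub (Set.range f) p hF hne with hL
  set W := L.map (gradAt p) with hW
  by_cases hr : s + 1 ≤ Module.finrank ℂ W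
  · obtain ⟨v, hv⟩ := exists_linearIndependent_of_le_finrank hr
    have hlift : ∀ j, ∃ g, DeltaSet (Set.range f) p g ∧ gradAt p g = v j := fun j => (v j).2
    choose g hg hgv using hlift
    refine ⟨g, hg, ?_, fun j => (hg j).totalDegree_le hFm⟩
    have hli : LinearIndependent ℂ (fun j => (v j : Fin n → ℂ)) :=
      hv.map' W.subtype (Submodule.ker_subtype W)
    have hrow : (Matrix.of fun (i : Fin (s + 1)) (j : Fin n) => eval p (pderiv j (g i))) =
        Matrix.of fun j => (v j : Fin n → ℂ) := by
      ext i j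
      exact congrFun (hgv i) j
    rw [jacRank, hrow, LinearIndependent.rank_matrix (by exact hli)]
    simp
  exfalso
  push Not at hr
  set r := Module.finrank ℂ W with hrdef
  have hrn : r ≤ n := by
    have := Submodule.finrank_le W
    simpa using this
  -- lifts of a basis of `W`
  let v := Module.finBasis ℂ W
  have hlift : ∀ j, ∃ g, DeltaSet (Set.range f) p g ∧ gradAt p g = v j := fun j => (v j).2
  choose g hg hgv using hlift
  have hgL : ∀ j, g j ∈ L := hg
  obtain ⟨W', hW'⟩ := Submodule.exists_isCompl W
  have hdW : r + Module.finrank ℂ W' = n := by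
    have := Submodule.finrank_add_eq_of_isCompl hW'
    simpa using this
  set d := Module.finrank ℂ W' with hd
  let v' := Module.finBasis ℂ W'
  let l : Fin d → MvPolynomial (Fin n) ℂ := fun j => linForm p (v' j)
  have : FiniteDimensional ℂ L := by
    refine Submodule.finiteDimensional_of_le (S₂ := restrictTotalDegree (Fin n) ℂ m) ?_
    intro x hx
    rw [mem_restrictTotalDegree]
    exact DeltaSet.totalDegree_le hFm hx
  let D : Submodule ℂ (MvPolynomial (Fin n) ℂ) := L ⊓ LinearMap.ker (gradAt p)
  have : FiniteDimensional ℂ D := Submodule.finiteDimensional_of_le (inf_le_left : D ≤ L)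
  let b := Module.finBasis ℂ D
  have hbD : ∀ x ∈ D, ∃ M : Fin (Module.finrank ℂ D) → ℂ, x = ∑ c, M c • (b c : MvPolynomial (Fin n) ℂ) := by
    intro x hx
    refine ⟨fun c => b.repr ⟨x, hx⟩ c, ?_⟩
    have := congrArg (Subtype.val) (b.sum_repr ⟨x, hx⟩)
    rw [Submodule.coe_sum] at this
    exact this.symm
  have hdecomp : ∀ x ∈ L, ∃ M : Fin (Module.finrank ℂ D) → ℂ, ∀ y, (∀ a, eval y (g a) = 0) →
      eval y x = ∑ c, M c * eval y (b c : MvPolynomial (Fin n) ℂ) := by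
    intro x hx
    let w : W := ⟨gradAt p x, Submodule.mem_map_of_mem hx⟩
    have hmem : x - ∑ a, v.repr w a • g a ∈ D := by
      refine ⟨L.sub_mem hx (L.sum_mem fun a _ => L.smul_mem _ (hgL a)), ?_⟩
      change gradAt p _ = 0
      rw [map_sub, map_sum]
      have := congrArg (Subtype.val) (v.sum_repr w)
      simp only [map_smul, hgv]
      rw [sub_eq_zero]
      rw [Submodule.coe_sum] at this
      exact this.symm
    obtain ⟨M, hM⟩ := hbD _ hmem
    refine ⟨M, fun y hy => ?_⟩
    have := congrArg (eval y) hM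
    simpa [smul_eval, hy] using this
  have hparam := exists_param g l (fun c => (b c : MvPolynomial (Fin n) ℂ)) p
    (fun a => (hg a).eval_eq_zero hF) (fun a => eval_linForm _ _)
    (fun a => DeltaSet.eval_eq_zero hF (b a).2.1) hdW
    (by
      have h1 : LinearIndependent ℂ (Sum.elim (fun j => (v j : Fin n → ℂ))
          (fun j => (v' j : Fin n → ℂ))) := by
        refine LinearIndependent.sum_type
          (v.linearIndependent.map' W.subtype (Submodule.ker_subtype W))
          (v'.linearIndependent.map' W'.subtype (Submodule.ker_subtype W')) ?_
        refine hW'.disjoint.mono ?_ ?_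
        · rw [Submodule.span_le]; rintro _ ⟨j, rfl⟩; exact (v j).2
        · rw [Submodule.span_le]; rintro _ ⟨j, rfl⟩; exact (v' j).2
      convert! h1 using 1
      ext a i
      rcases a with a | a
      · exact congrFun (hgv a) i
      · exact congrFun (grad_linForm p (v' a)) i)
    (by
      intro c i
      refine hdecomp _ ?_
      refine DeltaSet.deriv i (b c).2.1 ?_
      exact congrFun (LinearMap.mem_ker.1 (b c).2.2) i)
  have hdim' : (d : WithBot ℕ∞) ≤
      ringKrullDim (MvPolynomial (Fin n) ℂ ⧸ Ideal.span (Set.range f)) := by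
    refine dim_ge _ l fun q hq => ?_
    have hev : ∀ᶠ y in nhds (0 : Fin d → ℂ), eval y q = eval y (0 : MvPolynomial (Fin d) ℂ) := by
      filter_upwards [hparam] with y hy
      obtain ⟨x, hxg, hxb, hxl⟩ := hy
      have hI : Ideal.span (Set.range f) ≤ RingHom.ker (eval x) := by
        rw [Ideal.span_le]
        intro u hu
        obtain ⟨M, hM⟩ := hdecomp u (DeltaSet.base hu)
        change eval x u = 0
        rw [hM x hxg]
        simp [hxb]
      have h0 : eval x (aeval l q) = 0 := hI hq
      have h2 : eval x (aeval l q) = eval y q := by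
        rw [← funext hxl]
        exact eval_aeval_eq l x q
      rw [← h2, h0, map_zero]
    refine MvPolynomial.funext fun y => ?_
    exact congrFun (AnalyticOnNhd.eq_of_eventuallyEq
      (AnalyticOnNhd.eval_mvPolynomial (𝕜 := ℂ) q)
      (AnalyticOnNhd.eval_mvPolynomial (𝕜 := ℂ) (0 : MvPolynomial (Fin d) ℂ)) hev) y
  have h3 := lt_of_le_of_lt hdim' hdim
  have h4 : d < n - s := by exact_mod_cast h3
  omega
end

section
/- Let F = {f₁,…,fₙ} ⊂ ℂ[x₁,…,xₙ] be a polynomial system with an isolated singular zero p ∈ ℂⁿ, and let λ = (λ₁,…,λₙ) ∈ ℂⁿ be a nonzero vector with J(F)(p)·λᵀ = 0. Define G = {λ₁ ∂f_i/∂x₁ + ⋯ + λₙ ∂f_i/∂xₙ : i = 1,…,n}. Then the multiplicity of p as a zero of the augmented system F ∪ G is strictly smaller than the multiplicity of p as a zero of F. -/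
open MvPolynomial

/-- The image in `ℂ[x]/⟨H⟩` of the maximal ideal `⟨x₁ − p₁,…,xₙ − pₙ⟩` of the point `p`. -/
noncomputable def maxIdealAt {n : ℕ} (H : Set (MvPolynomial (Fin n) ℂ)) (p : Fin n → ℂ) :
    Ideal (MvPolynomial (Fin n) ℂ ⧸ Ideal.span H) :=
  Ideal.map (Ideal.Quotient.mk (Ideal.span H))
    (Ideal.span (Set.range fun i : Fin n => X i - C (p i)))

open Classical in
/-- The multiplicity of `p` as a zero of the polynomial system `H`: the ℂ-vector-space
dimension of the localization of `ℂ[x₁,…,xₙ]/⟨H⟩` at the maximal ideal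
`⟨x₁ − p₁,…,xₙ − pₙ⟩` (and `0` in the degenerate case where this ideal is not prime,
which cannot happen when `p` is an isolated zero of `H`). -/
noncomputable def zeroMultiplicity {n : ℕ} (H : Set (MvPolynomial (Fin n) ℂ))
    (p : Fin n → ℂ) : ℕ :=
  if h : (maxIdealAt H p).IsPrime then
    haveI := h
    Module.finrank ℂ (Localization.AtPrime (maxIdealAt H p))
  else 0

namespace Defl

lemma exists_near_root (f : Polynomial ℂ) (hf : f.Monic) (hd : 0 < f.natDegree) (t : ℂ) :
    ∃ r, f.eval r = 0 ∧ ‖t - r‖ ^ f.natDegree ≤ ‖f.eval t‖ := by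
  have hs := IsAlgClosed.splits f
  by_contra hcon
  push Not at hcon
  have hcard : f.roots.card = f.natDegree := hs.natDegree_eq_card_roots.symm
  have hev : f.eval t = (f.roots.map (fun a => t - a)).prod := by
    conv_lhs => rw [hs.eq_prod_roots_of_monic hf]
    rw [Polynomial.eval_multiset_prod, Multiset.map_map]
    simp
  have key : ∀ m : Multiset ℂ, (∀ r ∈ m, ‖f.eval t‖ < ‖t - r‖ ^ f.natDegree) → m ≠ 0 →
      ‖f.eval t‖ ^ m.card < ‖(m.map (fun a => t - a)).prod‖ ^ f.natDegree := by
    intro m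
    induction m using Multiset.induction_on with
    | empty => intro _ h; exact absurd rfl h
    | cons a m ih =>
      intro h _
      have ha := h a (Multiset.mem_cons_self a m)
      by_cases hm : m = 0
      · subst hm; simpa using ha
      · have := ih (fun r hr => h r (Multiset.mem_cons_of_mem hr)) hm
        rw [Multiset.card_cons, pow_succ', Multiset.map_cons, Multiset.prod_cons, norm_mul, mul_pow]
        exact mul_lt_mul'' ha this (norm_nonneg _) (by positivity)
  have h1 := key f.roots (fun r hr => hcon r ((Polynomial.mem_roots hf.ne_zero).1 hr))
    (by intro h; rw [h] at hcard; simp at hcard; omega)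
  rw [← hev, hcard] at h1
  exact lt_irrefl _ h1

lemma root_bound (f : Polynomial ℂ) (hf : f.Monic) (z : ℂ) (hz : f.eval z = 0) :
    ‖z‖ ≤ (∑ i ∈ Finset.range f.natDegree, ‖f.coeff i‖) + 1 := by
  have h := (Polynomial.IsRoot.norm_lt_cauchyBound hf.ne_zero (show f.IsRoot z from hz)).le
  have h' : ‖z‖ ≤ ((f.cauchyBound : NNReal) : ℝ) := by exact_mod_cast h
  refine h'.trans ?_
  simp only [Polynomial.cauchyBound, hf.leadingCoeff, nnnorm_one, div_one]
  push_cast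
  gcongr
  have : Finset.sup (Finset.range f.natDegree) (fun x => ‖f.coeff x‖₊) ≤
      ∑ i ∈ Finset.range f.natDegree, ‖f.coeff i‖₊ :=
    Finset.sup_le fun b hb =>
      Finset.single_le_sum (f := fun i => ‖f.coeff i‖₊) (fun _ _ => zero_le) hb
  have h2 := NNReal.coe_le_coe.2 this
  push_cast at h2
  exact h2

variable {n d : ℕ}

lemma exists_poly {B : Type*} [CommRing B] [IsDomain B]
    (g : MvPolynomial (Fin d) ℂ →+* B)
    (hinj : Function.Injective g) (hint : g.IsIntegral) (u : B) :
    ∃ h : Polynomial (MvPolynomial (Fin d) ℂ), h.Monic ∧ 0 < h.natDegree ∧ h.eval₂ g u = 0 ∧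
      ∀ k : Polynomial (MvPolynomial (Fin d) ℂ), k.eval₂ g u = 0 → h ∣ k := by
  let _ := g.toAlgebra
  have hu : IsIntegral (MvPolynomial (Fin d) ℂ) u := hint u
  have : FaithfulSMul (MvPolynomial (Fin d) ℂ) B :=
    (faithfulSMul_iff_algebraMap_injective _ _).2 hinj
  have : Module.IsTorsionFree (MvPolynomial (Fin d) ℂ) B :=
    inferInstance
  exact ⟨minpoly _ u, minpoly.monic hu, minpoly.natDegree_pos hu, minpoly.aeval _ u,
    fun k hk => minpoly.isIntegrallyClosed_dvd hu hk⟩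

lemma exists_point (P : Ideal (MvPolynomial (Fin n) ℂ))
    (g : MvPolynomial (Fin d) ℂ →+* (MvPolynomial (Fin n) ℂ ⧸ P))
    (hgC : ∀ c : ℂ, g (C c) = Ideal.Quotient.mk P (C c))
    (hint : g.IsIntegral) (u : MvPolynomial (Fin n) ℂ)
    (Y : Fin d → MvPolynomial (Fin n) ℂ) (hY : ∀ j, Ideal.Quotient.mk P (Y j) = g (X j))
    (h : Polynomial (MvPolynomial (Fin d) ℂ))
    (hdvd : ∀ k : Polynomial (MvPolynomial (Fin d) ℂ),
      k.eval₂ g (Ideal.Quotient.mk P u) = 0 → h ∣ k)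
    (y : Fin d → ℂ) (r : ℂ) (hr : (h.map (eval y)).eval r = 0) :
    ∃ q : Fin n → ℂ, (∀ a ∈ P, eval q a = 0) ∧ eval q u = r ∧ ∀ j, eval q (Y j) = y j := by
  let φ : Polynomial (MvPolynomial (Fin d) ℂ) →+* (MvPolynomial (Fin n) ℂ ⧸ P) :=
    Polynomial.eval₂RingHom g (Ideal.Quotient.mk P u)
  let ev : Polynomial (MvPolynomial (Fin d) ℂ) →+* ℂ := Polynomial.eval₂RingHom (eval y) r
  have hevs : Function.Surjective ev := fun c => ⟨Polynomial.C (C c), by simp [ev]⟩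
  have hmax : (RingHom.ker ev).IsMaximal := RingHom.ker_isMaximal_of_surjective ev hevs
  let := φ.toAlgebra
  have hφint : φ.IsIntegral := by
    have : (φ.comp Polynomial.C) = g := by ext <;> simp [φ]
    exact RingHom.IsIntegral.tower_top Polynomial.C φ (this ▸ hint)
  have : Algebra.IsIntegral (Polynomial (MvPolynomial (Fin d) ℂ)) (MvPolynomial (Fin n) ℂ ⧸ P) :=
    ⟨hφint⟩
  have hker : RingHom.ker φ ≤ RingHom.ker ev := by
    intro k hk
    obtain ⟨l, rfl⟩ := hdvd k hk
    rw [RingHom.mem_ker, map_mul]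
    have : ev h = 0 := by
      rw [Polynomial.eval_map] at hr; exact hr
    rw [this, zero_mul]
  obtain ⟨Q, hQ, hQc⟩ := Ideal.exists_ideal_over_maximal_of_isIntegral (RingHom.ker ev) hker
  have : (Q.comap (Ideal.Quotient.mk P)).IsMaximal :=
    Ideal.comap_isMaximal_of_surjective _ Ideal.Quotient.mk_surjective
  obtain ⟨q, hq⟩ := MvPolynomial.isMaximal_iff_eq_vanishingIdeal_singleton.1 this
  have hmem : ∀ a, eval q a = 0 ↔ Ideal.Quotient.mk P a ∈ Q := by
    intro a
    have := mem_vanishingIdeal_singleton_iff q a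
    rw [← hq, Ideal.mem_comap] at this
    rw [this]; simp [aeval_eq_eval]
  have hval : ∀ (k : Polynomial (MvPolynomial (Fin d) ℂ)) (a : MvPolynomial (Fin n) ℂ),
      Ideal.Quotient.mk P a = φ k → eval q a = ev k := by
    intro k a ha
    have h1 : k - Polynomial.C (C (ev k)) ∈ RingHom.ker ev := by
      rw [RingHom.mem_ker, map_sub]; simp [ev]
    rw [← hQc, Ideal.mem_comap] at h1
    have h2 : eval q (a - C (ev k)) = 0 := by
      rw [hmem, map_sub, ha, ← hgC]
      have : φ (Polynomial.C (C (ev k))) = g (C (ev k)) := by simp [φ]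
      rw [← this, ← map_sub]; exact h1
    simpa [sub_eq_zero] using h2
  refine ⟨q, fun a ha => ?_, ?_, fun j => ?_⟩
  · rw [hmem, Ideal.Quotient.eq_zero_iff_mem.2 ha]; exact Q.zero_mem
  · rw [hval Polynomial.X u (by simp [φ])]; simp [ev]
  · rw [hval (Polynomial.C (X j)) (Y j) (by simp [φ, hY])]; simp [ev]


lemma eval_point (P : Ideal (MvPolynomial (Fin n) ℂ))
    (g : MvPolynomial (Fin d) ℂ →+* (MvPolynomial (Fin n) ℂ ⧸ P))
    (hgC : ∀ c : ℂ, g (C c) = Ideal.Quotient.mk P (C c))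
    (u : MvPolynomial (Fin n) ℂ)
    (Y : Fin d → MvPolynomial (Fin n) ℂ) (hY : ∀ j, Ideal.Quotient.mk P (Y j) = g (X j))
    (h : Polynomial (MvPolynomial (Fin d) ℂ)) (hh : h.eval₂ g (Ideal.Quotient.mk P u) = 0)
    (q : Fin n → ℂ) (hq : ∀ a ∈ P, eval q a = 0) :
    (h.map (eval fun j => eval q (Y j))).eval (eval q u) = 0 := by
  let θ : (MvPolynomial (Fin n) ℂ ⧸ P) →+* ℂ := Ideal.Quotient.lift P (eval q) hq
  have hθ : ∀ a, θ (Ideal.Quotient.mk P a) = eval q a := fun a => Ideal.Quotient.lift_mk _ _ _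
  have hc : θ.comp g = eval fun j => eval q (Y j) := by
    refine MvPolynomial.ringHom_ext (fun c => ?_) (fun j => ?_)
    · rw [RingHom.comp_apply, hgC, hθ]; simp
    · rw [RingHom.comp_apply, ← hY, hθ]; simp
  rw [Polynomial.eval_map, ← hc, ← hθ, ← Polynomial.hom_eval₂, hh, map_zero]

lemma exists_sep (S : Set (Fin n → ℂ)) (hS : S.Finite) (p : Fin n → ℂ) :
    ∃ u : MvPolynomial (Fin n) ℂ, eval p u ≠ 0 ∧ ∀ q ∈ S, q ≠ p → eval q u = 0 := by
  classical
  have : ∀ q : Fin n → ℂ, ∃ v : MvPolynomial (Fin n) ℂ, eval q v = 0 ∧ (q ≠ p → eval p v ≠ 0) := by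
    intro q
    by_cases h : q = p
    · exact ⟨0, by simp, fun h' => absurd h h'⟩
    · obtain ⟨i, hi⟩ := Function.ne_iff.1 h
      exact ⟨X i - C (q i), by simp, fun _ => by simpa [sub_eq_zero] using hi.symm⟩
  choose v hv0 hv1 using this
  refine ⟨∏ q ∈ hS.toFinset.erase p, v q, ?_, ?_⟩
  · rw [map_prod, Finset.prod_ne_zero_iff]
    intro q hq
    exact hv1 q (Finset.ne_of_mem_erase hq)
  · intro q hq hne
    rw [map_prod]
    exact Finset.prod_eq_zero (Finset.mem_erase.2 ⟨hne, hS.mem_toFinset.2 hq⟩) (hv0 q)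

open Filter Topology in
/-- An irreducible variety of positive dimension has no isolated points. -/
theorem not_isolated (P : Ideal (MvPolynomial (Fin n) ℂ)) [P.IsPrime] (hP : ¬ P.IsMaximal)
    (p : Fin n → ℂ) (hp : ∀ a ∈ P, eval p a = 0) (ε : ℝ) (hε : 0 < ε) :
    ∃ q : Fin n → ℂ, q ≠ p ∧ dist q p < ε ∧ ∀ a ∈ P, eval q a = 0 := by
  obtain ⟨d, gA, hinj, hint⟩ := exists_integral_inj_algHom_of_fg ℂ (MvPolynomial (Fin n) ℂ ⧸ P)
  obtain ⟨g, rfl⟩ : ∃ g, g = gA.toRingHom := ⟨_, rfl⟩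
  set g : MvPolynomial (Fin d) ℂ →+* (MvPolynomial (Fin n) ℂ ⧸ P) := gA.toRingHom with hg
  have hinj : Function.Injective g := hinj
  have hint : g.IsIntegral := hint
  have hgC : ∀ c : ℂ, g (C c) = Ideal.Quotient.mk P (C c) := fun c => gA.commutes c
  clear_value g
  have hd : d ≠ 0 := by
    rintro rfl
    apply hP
    apply Ideal.Quotient.maximal_of_isField
    let _ := g.toAlgebra
    have : Algebra.IsIntegral (MvPolynomial (Fin 0) ℂ) (MvPolynomial (Fin n) ℂ ⧸ P) := ⟨hint⟩
    have hf : IsField (MvPolynomial (Fin 0) ℂ) :=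
      (MvPolynomial.isEmptyRingEquiv ℂ (Fin 0)).toMulEquiv.isField (Field.toIsField ℂ)
    exact isField_of_isIntegral_of_isField' hf
  have : ∀ j, ∃ Y, Ideal.Quotient.mk P Y = g (X j) := fun j => Ideal.Quotient.mk_surjective _
  choose Y hY using this
  have : ∀ i, ∃ h : Polynomial (MvPolynomial (Fin d) ℂ), h.Monic ∧
      h.eval₂ g (Ideal.Quotient.mk P (X i)) = 0 := fun i => hint _
  choose H hHm hH0 using this
  have hHev : ∀ q : Fin n → ℂ, (∀ a ∈ P, eval q a = 0) → ∀ i,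
      ((H i).map (eval fun j => eval q (Y j))).eval (q i) = 0 := by
    intro q hq i
    have := eval_point P g hgC (X i) Y hY (H i) (hH0 i) q hq
    simpa using this
  set y0 : Fin d → ℂ := fun j => eval p (Y j) with hy0
  let S : Set (Fin n → ℂ) := {q | (∀ a ∈ P, eval q a = 0) ∧ (fun j => eval q (Y j)) = y0}
  have hS : S.Finite := by
    refine Set.Finite.subset (Set.Finite.pi' (t := fun i => {z | ((H i).map (eval y0)).IsRoot z})
      (fun i => Polynomial.finite_setOfPred_isRoot ((hHm i).map _).ne_zero)) ?_
    rintro q ⟨hq, hqy⟩ i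
    have := hHev q hq i
    rw [hqy] at this
    exact this
  obtain ⟨u, hup, huS⟩ := exists_sep S hS p
  obtain ⟨h, hm, hdeg, h0, hdvd⟩ := exists_poly g hinj hint (Ideal.Quotient.mk P u)
  let yk : ℕ → Fin d → ℂ := fun k j => y0 j + 1 / ((k : ℂ) + 1)
  have hyk : Tendsto yk atTop (𝓝 y0) := by
    rw [tendsto_pi_nhds]
    intro j
    have := (tendsto_one_div_add_atTop_nhds_zero_nat (𝕜 := ℂ)).const_add (y0 j)
    simpa [yk] using this
  have hykne : ∀ k, yk k ≠ y0 := by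
    intro k hk
    have := congrFun hk ⟨0, Nat.pos_of_ne_zero hd⟩
    have h2 : (k : ℂ) + 1 ≠ 0 := Nat.cast_add_one_ne_zero k
    simp [yk, h2] at this
  have hnd : ∀ y : Fin d → ℂ, (h.map (eval y)).natDegree = h.natDegree := fun y =>
    hm.natDegree_map _
  have : ∀ k, ∃ q : Fin n → ℂ, (∀ a ∈ P, eval q a = 0) ∧ (∀ j, eval q (Y j) = yk k j) ∧
      ‖eval p u - eval q u‖ ^ h.natDegree ≤ ‖(h.map (eval (yk k))).eval (eval p u)‖ := by
    intro k
    obtain ⟨r, hr0, hr⟩ := exists_near_root (h.map (eval (yk k))) (hm.map _)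
      (by rw [hnd]; exact hdeg) (eval p u)
    obtain ⟨q, hq, hqu, hqY⟩ := exists_point P g hgC hint u Y hY h hdvd (yk k) r hr0
    refine ⟨q, hq, hqY, ?_⟩
    rw [hqu]; rwa [hnd] at hr
  choose q hqP hqY hqu using this
  -- continuity of the specialised polynomial
  have hcont : Continuous fun y : Fin d → ℂ => ‖(h.map (eval y)).eval (eval p u)‖ := by
    simp only [Polynomial.eval_map, Polynomial.eval₂_eq_sum_range]
    refine continuous_norm.comp (continuous_finsetSum _ fun i _ => ?_)
    exact (MvPolynomial.continuous_eval _).mul continuous_const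
  have hz : (h.map (eval y0)).eval (eval p u) = 0 := eval_point P g hgC u Y hY h h0 p hp
  have hlim : Tendsto (fun k => ‖(h.map (eval (yk k))).eval (eval p u)‖) atTop (𝓝 0) := by
    have := (hcont.tendsto y0).comp hyk
    simp only [hz, norm_zero] at this
    exact this
  have hlim2 : Tendsto (fun k => ‖eval p u - eval (q k) u‖ ^ h.natDegree) atTop (𝓝 0) :=
    squeeze_zero (fun _ => by positivity) hqu hlim
  -- boundedness
  let β : (Fin d → ℂ) → ℝ := fun y => ∑ i, ((∑ l ∈ Finset.range (H i).natDegree,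
    ‖eval y ((H i).coeff l)‖) + 1)
  have hβ : Continuous β := by
    refine continuous_finsetSum _ fun i _ => (continuous_finsetSum _ fun l _ => ?_).add
      continuous_const
    exact continuous_norm.comp (MvPolynomial.continuous_eval _)
  obtain ⟨M, hM⟩ := ((hβ.tendsto y0).comp hyk).bddAbove_range
  have hqb : ∀ k, q k ∈ Metric.closedBall (0 : Fin n → ℂ) M := by
    intro k
    have hk : β (yk k) ≤ M := hM ⟨k, rfl⟩
    have hβ0 : 0 ≤ β (yk k) := by positivity
    rw [mem_closedBall_zero_iff]
    refine (pi_norm_le_iff_of_nonneg (hβ0.trans hk)).2 fun i => le_trans ?_ hk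
    have h1 := hHev (q k) (hqP k) i
    have h2 : (fun j => eval (q k) (Y j)) = yk k := funext (hqY k)
    rw [h2] at h1
    have h3 := root_bound _ ((hHm i).map _) _ h1
    rw [(hHm i).natDegree_map] at h3
    simp only [Polynomial.coeff_map] at h3
    refine h3.trans ?_
    exact Finset.single_le_sum (f := fun i => (∑ l ∈ Finset.range (H i).natDegree,
      ‖eval (yk k) ((H i).coeff l)‖) + 1) (fun i _ => by positivity) (Finset.mem_univ i)
  obtain ⟨q', -, ψ, hψ, hq'⟩ := tendsto_subseq_of_bounded Metric.isBounded_closedBall hqb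
  have hev : ∀ a : MvPolynomial (Fin n) ℂ,
      Tendsto (fun k => eval (q (ψ k)) a) atTop (𝓝 (eval q' a)) := fun a =>
    ((MvPolynomial.continuous_eval a).tendsto q').comp hq'
  have hq'S : q' ∈ S := by
    refine ⟨fun a ha => ?_, funext fun j => ?_⟩
    · refine tendsto_nhds_unique (hev a) ?_
      simp only [hqP _ a ha]; exact tendsto_const_nhds
    · refine tendsto_nhds_unique (hev (Y j)) ?_
      simp only [hqY]
      exact ((tendsto_pi_nhds.1 hyk) j).comp hψ.tendsto_atTop
  have hq'u : eval q' u = eval p u := by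
    have h1 : Tendsto (fun k => ‖eval p u - eval (q (ψ k)) u‖ ^ h.natDegree) atTop
        (𝓝 (‖eval p u - eval q' u‖ ^ h.natDegree)) :=
      ((tendsto_const_nhds.sub (hev u)).norm).pow _
    have h2 := tendsto_nhds_unique h1 (hlim2.comp hψ.tendsto_atTop)
    have h3 := (pow_eq_zero_iff hdeg.ne').1 h2
    rw [norm_eq_zero, sub_eq_zero] at h3
    exact h3.symm
  have hq'p : q' = p := by
    by_contra hne
    exact hup (hq'u ▸ huS q' hq'S hne)
  rw [hq'p] at hq'
  obtain ⟨k, hk⟩ := ((Metric.tendsto_nhds.1 hq') ε hε).exists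
  refine ⟨q (ψ k), fun he => hykne (ψ k) ?_, hk, hqP _⟩
  rw [hy0, ← he]
  exact (funext (hqY (ψ k))).symm

end Defl

namespace Defl
variable {n : ℕ}

/-- The directional derivative. -/
noncomputable def dirD (lam : Fin n → ℂ) :
    Derivation ℂ (MvPolynomial (Fin n) ℂ) (MvPolynomial (Fin n) ℂ) :=
  ∑ j, lam j • pderiv j

lemma dirD_apply (lam : Fin n → ℂ) (a : MvPolynomial (Fin n) ℂ) :
    dirD lam a = ∑ j, C (lam j) * pderiv j a := by
  simp only [dirD]
  rw [← Derivation.coeFnAddMonoidHom_apply, map_sum, Finset.sum_apply]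
  simp [smul_eq_C_mul]

lemma no_pow_mem (I : Ideal (MvPolynomial (Fin n) ℂ)) (p : Fin n → ℂ)
    (hI : ∀ a ∈ I, eval p a = 0)
    (D : Derivation ℂ (MvPolynomial (Fin n) ℂ) (MvPolynomial (Fin n) ℂ))
    (s : MvPolynomial (Fin n) ℂ) (hs : eval p s ≠ 0) (hD : ∀ a ∈ I, s * D a ∈ I)
    (l : MvPolynomial (Fin n) ℂ) (hl : D l = 1) (k : ℕ) :
    ∀ t, eval p t ≠ 0 → t * l ^ k ∉ I := by
  induction k with
  | zero => intro t ht h; exact ht (hI _ (by simpa using h))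
  | succ k ih =>
    intro t ht h
    have h1 := I.mul_mem_left t (hD _ h)
    have h2 := I.mul_mem_left (s * D t) h
    have h3 : C ((k : ℂ) + 1) * (s * t * t) * l ^ k ∈ I := by
      have := I.sub_mem h1 h2
      convert this using 1
      rw [Derivation.leibniz, Derivation.leibniz_pow, hl]
      simp only [smul_eq_mul, nsmul_eq_mul, add_tsub_cancel_right, map_add, map_natCast, map_one,
        Nat.cast_add, Nat.cast_one]
      ring
    refine ih _ ?_ h3
    have : (k : ℂ) + 1 ≠ 0 := Nat.cast_add_one_ne_zero k
    simp [ht, hs, this]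

lemma stable_of_gens (f : Fin n → MvPolynomial (Fin n) ℂ)
    (D : Derivation ℂ (MvPolynomial (Fin n) ℂ) (MvPolynomial (Fin n) ℂ))
    (s : MvPolynomial (Fin n) ℂ) (h : ∀ i, s * D (f i) ∈ Ideal.span (Set.range f)) :
    ∀ a ∈ Ideal.span (Set.range f), s * D a ∈ Ideal.span (Set.range f) := by
  intro a ha
  induction ha using Submodule.span_induction with
  | mem x hx => obtain ⟨i, rfl⟩ := hx; exact h i
  | zero => simp
  | add x y _ _ hx hy => rw [map_add, mul_add]; exact Ideal.add_mem _ hx hy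
  | smul a x hx' hx =>
    rw [smul_eq_mul, Derivation.leibniz, smul_eq_mul, smul_eq_mul, mul_add]
    refine Ideal.add_mem _ ?_ ?_
    · rw [mul_left_comm]; exact Ideal.mul_mem_left _ _ hx
    · rw [mul_left_comm]; exact Ideal.mul_mem_right _ _ hx'

lemma exists_lin (lam : Fin n → ℂ) (hlam : lam ≠ 0) (p : Fin n → ℂ) :
    ∃ l : MvPolynomial (Fin n) ℂ, eval p l = 0 ∧ dirD lam l = 1 := by
  obtain ⟨j, hj⟩ := Function.ne_iff.1 hlam
  refine ⟨C (lam j)⁻¹ * (X j - C (p j)), by simp, ?_⟩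
  rw [dirD_apply, Finset.sum_eq_single j]
  · have hj' : lam j ≠ 0 := hj
    simp only [Derivation.leibniz, map_sub, pderiv_C, pderiv_X_self, smul_eq_mul]
    simp [← C_mul, hj']
  · intro b _ hb
    simp [Derivation.leibniz, pderiv_X_of_ne hb.symm]
  · simp

lemma sub_mem_point (p : Fin n → ℂ) (a : MvPolynomial (Fin n) ℂ) :
    a - C (eval p a) ∈ Ideal.span (Set.range fun i : Fin n => X i - C (p i)) := by
  set m := Ideal.span (Set.range fun i : Fin n => (X i - C (p i) : MvPolynomial (Fin n) ℂ))
  have : Ideal.Quotient.mk m = ((Ideal.Quotient.mk m).comp C).comp (eval p) := by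
    refine MvPolynomial.ringHom_ext (fun c => by simp) (fun i => ?_)
    simp only [RingHom.comp_apply, eval_X]
    exact Ideal.Quotient.eq.2 (Ideal.subset_span ⟨i, rfl⟩)
  exact Ideal.Quotient.eq.1 (RingHom.congr_fun this a)

lemma mem_of_mul_unit {A : Type*} [CommRing A] (J : Ideal A) (x s a c : A) (h : x * s = a)
    (hu : IsUnit s) (hm : c * s - a ∈ J) : c - x ∈ J := by
  rw [← Ideal.mul_unit_mem_iff_mem J hu, sub_mul, h]
  exact hm

lemma finite_of_local (A : Type*) [CommRing A] [IsLocalRing A] [IsNoetherianRing A]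
    [Ring.KrullDimLE 0 A] [Algebra ℂ A]
    (hA : ∀ x : A, ∃ c : ℂ, algebraMap ℂ A c - x ∈ IsLocalRing.maximalIdeal A) :
    Module.Finite ℂ A := by
  have : IsArtinianRing A := isArtinianRing_iff_krullDimLE_zero.2 inferInstance
  have : Module.Finite ℂ (A ⧸ Ring.jacobson A) := by
    refine Module.Finite.of_surjective (Algebra.linearMap ℂ (A ⧸ Ring.jacobson A)) ?_
    intro z
    obtain ⟨x, rfl⟩ := Ideal.Quotient.mk_surjective z
    obtain ⟨c, hc⟩ := hA x
    refine ⟨c, Ideal.Quotient.eq.2 ?_⟩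
    rw [IsLocalRing.ringJacobson_eq_maximalIdeal A]
    exact hc
  exact IsSemiprimaryRing.finite_of_isArtinian ℂ A A

lemma finrank_pos_alg (A : Type*) [CommRing A] [Nontrivial A] [Algebra ℂ A] [Module.Finite ℂ A] :
    0 < Module.finrank ℂ A := Module.finrank_pos

section
variable (H : Set (MvPolynomial (Fin n) ℂ)) (p : Fin n → ℂ)

lemma mk_mem_of_eval (a : MvPolynomial (Fin n) ℂ) (ha : eval p a = 0) :
    Ideal.Quotient.mk (Ideal.span H) a ∈ maxIdealAt H p := by
  have := sub_mem_point p a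
  rw [ha, map_zero, sub_zero] at this
  exact Ideal.mem_map_of_mem _ this

lemma mk_mem_iff (h : (maxIdealAt H p).IsPrime) (a : MvPolynomial (Fin n) ℂ) :
    Ideal.Quotient.mk (Ideal.span H) a ∈ maxIdealAt H p ↔ eval p a = 0 := by
  refine ⟨fun ha => ?_, mk_mem_of_eval H p a⟩
  by_contra hne
  apply h.ne_top
  have h1 := Ideal.mem_map_of_mem (Ideal.Quotient.mk (Ideal.span H)) (sub_mem_point p a)
  have h2 := (maxIdealAt H p).sub_mem ha h1
  rw [← map_sub, sub_sub_cancel] at h2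
  refine Ideal.eq_top_of_isUnit_mem _ h2 ?_
  exact ((isUnit_iff_ne_zero.2 hne).map C).map _

lemma isPrime_of_zero (h0 : ∀ a ∈ H, eval p a = 0) : (maxIdealAt H p).IsPrime := by
  have hI : ∀ a ∈ Ideal.span H, eval p a = 0 := by
    intro a ha
    have : Ideal.span H ≤ RingHom.ker (eval p) := Ideal.span_le.2 h0
    exact this ha
  have : maxIdealAt H p = RingHom.ker (Ideal.Quotient.lift (Ideal.span H) (eval p) hI) := by
    apply le_antisymm
    · rw [maxIdealAt, Ideal.map_le_iff_le_comap, Ideal.span_le]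
      rintro _ ⟨i, rfl⟩
      simp [RingHom.mem_ker]
    · intro b hb
      obtain ⟨a, rfl⟩ := Ideal.Quotient.mk_surjective b
      rw [RingHom.mem_ker, Ideal.Quotient.lift_mk] at hb
      exact mk_mem_of_eval H p a hb
  rw [this]
  exact RingHom.ker_isPrime _

variable [hprime : (maxIdealAt H p).IsPrime]

/-- The map from polynomials to the local ring at the point. -/
noncomputable def toLoc : MvPolynomial (Fin n) ℂ →+* Localization.AtPrime (maxIdealAt H p) :=
  (algebraMap _ _).comp (Ideal.Quotient.mk (Ideal.span H))

lemma toLoc_C (c : ℂ) : toLoc H p (C c) = algebraMap ℂ _ c := rfl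

lemma toLoc_eq_zero_iff (a : MvPolynomial (Fin n) ℂ) :
    toLoc H p a = 0 ↔ ∃ s, eval p s ≠ 0 ∧ s * a ∈ Ideal.span H := by
  rw [toLoc, RingHom.comp_apply,
    IsLocalization.map_eq_zero_iff (maxIdealAt H p).primeCompl]
  constructor
  · rintro ⟨⟨m, hm⟩, h⟩
    obtain ⟨s, rfl⟩ := Ideal.Quotient.mk_surjective m
    refine ⟨s, fun h0 => hm ((mk_mem_iff H p hprime s).2 h0), ?_⟩
    rw [← map_mul] at h
    exact Ideal.Quotient.eq_zero_iff_mem.1 h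
  · rintro ⟨s, hs, h⟩
    refine ⟨⟨Ideal.Quotient.mk _ s, fun h0 => hs ((mk_mem_iff H p hprime s).1 h0)⟩, ?_⟩
    rw [← map_mul]
    exact Ideal.Quotient.eq_zero_iff_mem.2 h

lemma toLoc_isUnit (s : MvPolynomial (Fin n) ℂ) (hs : eval p s ≠ 0) : IsUnit (toLoc H p s) :=
  IsLocalization.map_units (M := (maxIdealAt H p).primeCompl) _
    ⟨Ideal.Quotient.mk _ s, fun h0 => hs ((mk_mem_iff H p hprime s).1 h0)⟩

lemma toLoc_surj (x : Localization.AtPrime (maxIdealAt H p)) :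
    ∃ a s, eval p s ≠ 0 ∧ x * toLoc H p s = toLoc H p a := by
  obtain ⟨⟨b, ⟨m, hm⟩⟩, h⟩ := IsLocalization.surj (maxIdealAt H p).primeCompl x
  obtain ⟨s, rfl⟩ := Ideal.Quotient.mk_surjective m
  obtain ⟨a, rfl⟩ := Ideal.Quotient.mk_surjective b
  exact ⟨a, s, fun h0 => hm ((mk_mem_iff H p hprime s).2 h0), h⟩

lemma toLoc_mem_maximal (a : MvPolynomial (Fin n) ℂ) (ha : eval p a = 0) :
    toLoc H p a ∈ IsLocalRing.maximalIdeal (Localization.AtPrime (maxIdealAt H p)) :=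
  (IsLocalization.AtPrime.to_map_mem_maximal_iff _ (maxIdealAt H p) _).2
    (mk_mem_of_eval H p a ha)

lemma krullDimLE (hmin : ∀ P : Ideal (MvPolynomial (Fin n) ℂ), P.IsPrime → Ideal.span H ≤ P →
      (∀ a ∈ P, eval p a = 0) → P.IsMaximal) :
    Ring.KrullDimLE 0 (Localization.AtPrime (maxIdealAt H p)) := by
  refine Ring.KrullDimLE.mk₀ fun J hJ => ?_
  have hc : ∀ a ∈ J.comap (toLoc H p), eval p a = 0 := by
    intro a ha
    by_contra hne
    exact hJ.ne_top (Ideal.eq_top_of_isUnit_mem _ ha (toLoc_isUnit H p a hne))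
  have hmax : (J.comap (toLoc H p)).IsMaximal := by
    refine hmin _ (Ideal.comap_isPrime _ _) ?_ hc
    intro a ha
    have : toLoc H p a = 0 := (toLoc_eq_zero_iff H p a).2 ⟨1, by simp, by simpa using ha⟩
    rw [Ideal.mem_comap, this]; exact J.zero_mem
  have heq : J.comap (toLoc H p) = RingHom.ker (eval p) :=
    hmax.eq_of_le (RingHom.ker_isPrime _).ne_top hc
  have hle : IsLocalRing.maximalIdeal (Localization.AtPrime (maxIdealAt H p)) ≤ J := by
    intro x hx
    obtain ⟨a, s, hs, h⟩ := toLoc_surj H p x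
    have hu := toLoc_isUnit H p s hs
    have ha : eval p a = 0 := by
      by_contra hne
      have := Ideal.mul_mem_right (toLoc H p s) _ hx
      rw [h] at this
      exact (IsLocalRing.mem_maximalIdeal _).1 this (toLoc_isUnit H p a hne)
    have : a ∈ J.comap (toLoc H p) := by rw [heq]; exact ha
    rw [Ideal.mem_comap, ← h] at this
    exact (Ideal.mul_unit_mem_iff_mem J hu).1 this
  rw [← (IsLocalRing.maximalIdeal.isMaximal _).eq_of_le hJ.ne_top hle]
  infer_instance

instance : IsNoetherianRing (Localization.AtPrime (maxIdealAt H p)) :=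
  IsLocalization.isNoetherianRing (maxIdealAt H p).primeCompl _ inferInstance

lemma finite_loc [Ring.KrullDimLE 0 (Localization.AtPrime (maxIdealAt H p))] :
    Module.Finite ℂ (Localization.AtPrime (maxIdealAt H p)) := by
  refine finite_of_local (Localization.AtPrime (maxIdealAt H p)) fun x => ?_
  obtain ⟨a, s, hs, h⟩ := toLoc_surj H p x
  refine ⟨eval p a / eval p s, mem_of_mul_unit _ _ _ _ _ h (toLoc_isUnit H p s hs) ?_⟩
  have := toLoc_mem_maximal H p (C (eval p a / eval p s) * s - a) (by simp [hs])
  rw [map_sub, map_mul, toLoc_C] at this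
  exact this

end

lemma finrank_lt_of_surj {A B : Type*} [CommRing A] [CommRing B] [Algebra ℂ A] [Algebra ℂ B]
    [Module.Finite ℂ A] (ψ : A →ₐ[ℂ] B) (hsurj : Function.Surjective ψ) (a : A) (ha : ψ a = 0)
    (hne : a ≠ 0) : Module.finrank ℂ B < Module.finrank ℂ A := by
  have hr := ψ.toLinearMap.finrank_range_add_finrank_ker
  rw [LinearMap.range_eq_top.2 hsurj, finrank_top] at hr
  have hker : 0 < Module.finrank ℂ (LinearMap.ker ψ.toLinearMap) := by
    have hm : a ∈ LinearMap.ker ψ.toLinearMap := ha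
    have : Nontrivial (LinearMap.ker ψ.toLinearMap) :=
      ⟨⟨_, hm⟩, 0, fun h => hne (congrArg Subtype.val h)⟩
    exact Module.finrank_pos
  omega

lemma finrank_lt (H H' : Set (MvPolynomial (Fin n) ℂ)) (p : Fin n → ℂ) (hHH : H ⊆ H')
    [h1 : (maxIdealAt H p).IsPrime] [h2 : (maxIdealAt H' p).IsPrime]
    [Module.Finite ℂ (Localization.AtPrime (maxIdealAt H p))]
    (a : MvPolynomial (Fin n) ℂ) (ha : a ∈ H') (hne : toLoc H p a ≠ 0) :
    Module.finrank ℂ (Localization.AtPrime (maxIdealAt H' p)) <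
      Module.finrank ℂ (Localization.AtPrime (maxIdealAt H p)) := by
  let φ : (MvPolynomial (Fin n) ℂ ⧸ Ideal.span H) →ₐ[ℂ] (MvPolynomial (Fin n) ℂ ⧸ Ideal.span H') :=
    Ideal.Quotient.factorₐ ℂ (Ideal.span_mono hHH)
  have hφ : ∀ b, φ (Ideal.Quotient.mk _ b) = Ideal.Quotient.mk _ b := fun b => rfl
  have hc : maxIdealAt H p = (maxIdealAt H' p).comap φ := by
    ext b
    obtain ⟨b, rfl⟩ := Ideal.Quotient.mk_surjective b
    rw [mk_mem_iff H p h1, Ideal.mem_comap, hφ, mk_mem_iff H' p h2]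
  let ψ := Localization.localAlgHom (maxIdealAt H p) (maxIdealAt H' p) φ hc
  have hψ : ∀ b, ψ (toLoc H p b) = toLoc H' p b := fun b =>
    Localization.localRingHom_to_map _ _ φ.toRingHom hc _
  have hsurj : Function.Surjective ψ := by
    intro x
    obtain ⟨b, s, hs, h⟩ := toLoc_surj H' p x
    obtain ⟨v, hv⟩ := toLoc_isUnit H p s hs
    refine ⟨toLoc H p b * ↑v⁻¹, ?_⟩
    refine (toLoc_isUnit H' p s hs).mul_right_cancel ?_
    rw [h, ← hψ s, ← map_mul, mul_assoc, ← hv, Units.inv_mul, mul_one, hψ]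
  refine finrank_lt_of_surj (A := Localization.AtPrime (maxIdealAt H p))
    (B := Localization.AtPrime (maxIdealAt H' p)) ψ hsurj (toLoc H p a) ?_ hne
  rw [hψ]
  exact (toLoc_eq_zero_iff H' p a).2 ⟨1, by simp, by simpa using Ideal.subset_span ha⟩

end Defl

/-- Let `F = {f₁,…,fₙ} ⊂ ℂ[x₁,…,xₙ]` have an isolated singular zero
`p ∈ ℂⁿ` and let `λ ∈ ℂⁿ` be a nonzero vector with `J(F)(p)·λᵀ = 0`. For
`G = {λ₁ ∂fᵢ/∂x₁ + ⋯ + λₙ ∂fᵢ/∂xₙ : i = 1,…,n}`, the multiplicity of `p` as a zero of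
`F ∪ G` is strictly smaller than the multiplicity of `p` as a zero of `F`. -/
theorem multiplicity_lt_of_deflation_right_kernel {n : ℕ}
    (f : Fin n → MvPolynomial (Fin n) ℂ) (p : Fin n → ℂ)
    (hzero : ∀ i, eval p (f i) = 0)
    (hisolated : ∃ ε > 0, ∀ y : Fin n → ℂ, dist y p < ε → (∀ i, eval y (f i) = 0) → y = p)
    (hsingular : jacRank f p < n)
    (lam : Fin n → ℂ) (hlam : lam ≠ 0)
    (hker : ∀ i : Fin n, ∑ j : Fin n, eval p (pderiv j (f i)) * lam j = 0) :
    zeroMultiplicity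
        (Set.range f ∪
          Set.range fun i : Fin n => ∑ j : Fin n, C (lam j) * pderiv j (f i)) p <
      zeroMultiplicity (Set.range f) p := by
  classical
  have hI : ∀ a ∈ Ideal.span (Set.range f), eval p a = 0 := by
    intro a ha
    have : Ideal.span (Set.range f) ≤ RingHom.ker (eval p) :=
      Ideal.span_le.2 (by rintro _ ⟨i, rfl⟩; exact hzero i)
    exact this ha
  have hp1 : (maxIdealAt (Set.range f) p).IsPrime :=
    Defl.isPrime_of_zero _ _ (by rintro _ ⟨i, rfl⟩; exact hzero i)
  obtain ⟨ε, hε, hiso⟩ := hisolated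
  have hk : Ring.KrullDimLE 0 (Localization.AtPrime (maxIdealAt (Set.range f) p)) := by
    refine Defl.krullDimLE _ _ fun P hP hle h0 => ?_
    by_contra hmax
    obtain ⟨q, hqp, hqd, hq⟩ := Defl.not_isolated P hmax p h0 ε hε
    exact hqp (hiso q hqd fun i => hq _ (hle (Ideal.subset_span ⟨i, rfl⟩)))
  have hfin := Defl.finite_loc (Set.range f) p
  have hR : zeroMultiplicity (Set.range f) p =
      Module.finrank ℂ (Localization.AtPrime (maxIdealAt (Set.range f) p)) := by
    rw [zeroMultiplicity, dif_pos hp1]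
  rw [hR, zeroMultiplicity]
  split_ifs with hp2
  · -- some directional derivative does not vanish in the local ring
    have hex : ∃ i, Defl.toLoc (Set.range f) p (Defl.dirD lam (f i)) ≠ 0 := by
      by_contra hcon
      push Not at hcon
      simp only [Defl.toLoc_eq_zero_iff] at hcon
      choose s hs hsm using hcon
      obtain ⟨l, hl0, hl1⟩ := Defl.exists_lin lam hlam p
      have hnil : IsNilpotent (Defl.toLoc (Set.range f) p l) := by
        have hm := Defl.toLoc_mem_maximal (Set.range f) p l hl0
        rw [← Ring.KrullDimLE.nilradical_eq_maximalIdeal] at hm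
        exact hm
      obtain ⟨k, hk⟩ := hnil
      rw [← map_pow, Defl.toLoc_eq_zero_iff] at hk
      obtain ⟨t, ht, htl⟩ := hk
      refine Defl.no_pow_mem _ p hI (Defl.dirD lam) (∏ i, s i) ?_
        (Defl.stable_of_gens f _ _ fun i => ?_) l hl1 k t ht htl
      · rw [map_prod, Finset.prod_ne_zero_iff]
        exact fun i _ => hs i
      · rw [← Finset.mul_prod_erase _ _ (Finset.mem_univ i), mul_right_comm]
        exact Ideal.mul_mem_right _ _ (hsm i)
    obtain ⟨i, hi⟩ := hex
    exact Defl.finrank_lt _ _ p Set.subset_union_left _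
      (Or.inr ⟨i, (Defl.dirD_apply lam (f i)).symm⟩) hi
  · exact Defl.finrank_pos_alg (Localization.AtPrime (maxIdealAt (Set.range f) p))
end

section
/- Let F = {f₁,…,fₙ} ⊂ ℂ[x₁,…,xₙ] be a polynomial system with an isolated singular zero p ∈ ℂⁿ, and let λ = (λ₁,…,λₙ) ∈ ℂⁿ be a nonzero vector with λ·J(F)(p) = 0 (a left null vector of the Jacobian at p). Define G′ = {λ₁ ∂f₁/∂x_j + ⋯ + λₙ ∂fₙ/∂x_j : j = 1,…,n}. Then the multiplicity of p as a zero of the augmented system F ∪ G′ is strictly smaller than the multiplicity of p as a zero of F. -/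
open MvPolynomial

theorem aux_maximal_over {s : ℕ} {A : Type*} [CommRing A] [IsDomain A]
    [Algebra (MvPolynomial (Fin s) ℂ) A] [FaithfulSMul (MvPolynomial (Fin s) ℂ) A]
    [Algebra.IsIntegral (MvPolynomial (Fin s) ℂ) A] (z : A) (y : Fin s → ℂ) (ζ : ℂ)
    (hζ : ((minpoly (MvPolynomial (Fin s) ℂ) z).map (eval y)).eval ζ = 0) :
    ∃ Q : Ideal A, Q.IsMaximal ∧
      (∀ h : MvPolynomial (Fin s) ℂ, eval y h = 0 → algebraMap _ A h ∈ Q) ∧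
      z - algebraMap (MvPolynomial (Fin s) ℂ) A (C ζ) ∈ Q := by
  have hz : IsIntegral (MvPolynomial (Fin s) ℂ) z := Algebra.IsIntegral.isIntegral z
  let h0 : AdjoinRoot (minpoly (MvPolynomial (Fin s) ℂ) z) →+* ℂ :=
    AdjoinRoot.lift (eval y) ζ (by rw [Polynomial.eval₂_eq_eval_map]; exact hζ)
  let e := minpoly.equivAdjoin hz
  let h : Algebra.adjoin (MvPolynomial (Fin s) ℂ) ({z} : Set A) →+* ℂ :=
    h0.comp (e.symm : _ →+* _)
  have hal : ∀ r, h (algebraMap _ _ r) = eval y r := by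
    intro r
    have : e.symm (algebraMap _ _ r) = algebraMap _ _ r := AlgEquiv.commutes _ _
    change h0 (e.symm _) = _
    rw [this]
    exact AdjoinRoot.lift_of _
  have hzz : h ⟨z, Algebra.self_mem_adjoin_singleton _ z⟩ = ζ := by
    have : e.symm ⟨z, Algebra.self_mem_adjoin_singleton _ z⟩ = AdjoinRoot.root _ := by
      rw [AlgEquiv.symm_apply_eq]
      ext
      simp [e, minpoly.coe_equivAdjoin, AdjoinRoot.Minpoly.toAdjoin]
    change h0 (e.symm _) = _
    rw [this]
    exact AdjoinRoot.lift_root _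
  have hs : Function.Surjective h := by
    intro c
    exact ⟨algebraMap _ _ (C c), by rw [hal]; simp⟩
  have hm : (RingHom.ker h).IsMaximal := RingHom.ker_isMaximal_of_surjective h hs
  have : Algebra.IsIntegral (Algebra.adjoin (MvPolynomial (Fin s) ℂ) ({z} : Set A)) A :=
    Algebra.IsIntegral.tower_top (R := MvPolynomial (Fin s) ℂ)
  obtain ⟨Q, hQ, hQ2⟩ := Ideal.exists_ideal_over_maximal_of_isIntegral (S := A) (RingHom.ker h)
    (by
      rw [(RingHom.injective_iff_ker_eq_bot _).mp]
      · exact bot_le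
      · exact Subtype.val_injective)
  refine ⟨Q, hQ, ?_, ?_⟩
  · intro r hr
    have : algebraMap _ (Algebra.adjoin (MvPolynomial (Fin s) ℂ) ({z} : Set A)) r ∈ RingHom.ker h := by
      rw [RingHom.mem_ker, hal, hr]
    rw [← hQ2] at this
    exact this
  · have : (⟨z, Algebra.self_mem_adjoin_singleton _ z⟩ -
        algebraMap (MvPolynomial (Fin s) ℂ) _ (C ζ) :
      Algebra.adjoin (MvPolynomial (Fin s) ℂ) ({z} : Set A)) ∈ RingHom.ker h := by
      rw [RingHom.mem_ker, map_sub, hal, hzz]; simp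
    rw [← hQ2] at this
    exact this

/-- A monic complex polynomial of positive degree has a root which is small if its constant
coefficient is. -/
theorem aux_small_root (P : Polynomial ℂ) (hP : P.Monic) (hd : P.natDegree ≠ 0) :
    ∃ ζ, P.eval ζ = 0 ∧ ‖ζ‖ ^ P.natDegree ≤ ‖P.coeff 0‖ := by
  have hsp := IsAlgClosed.splits P
  have hcard : P.roots.card = P.natDegree := hsp.natDegree_eq_card_roots.symm
  have hprod : P.coeff 0 = (-1) ^ P.natDegree * P.roots.prod := by
    exact hsp.coeff_zero_eq_prod_roots_of_monic hP
  by_contra! H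
  have h1 : ∀ r ∈ P.roots, ‖P.coeff 0‖ < ‖r‖ ^ P.natDegree := fun r hr =>
    H r (by simpa using (Polynomial.mem_roots'.mp hr).2)
  have hn : ‖P.coeff 0‖ = (P.roots.map norm).prod := by
    rw [hprod, norm_mul, norm_pow, norm_neg, norm_one, one_pow, one_mul]
    exact map_multiset_prod (normHom : ℂ →*₀ ℝ) _ 
  obtain ⟨r0, hr0⟩ : ∃ r, r ∈ P.roots := by
    apply Multiset.exists_mem_of_ne_zero
    intro h; rw [h] at hcard; simp at hcard; exact hd hcard.symm
  -- let m be minimal norm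
  obtain ⟨r, hr, hmin⟩ := P.roots.toFinset.exists_min_image norm ⟨r0, by simpa using hr0⟩
  rw [Multiset.mem_toFinset] at hr
  have h2 := h1 r hr
  have h3 : ‖r‖ ^ P.natDegree ≤ (P.roots.map norm).prod := by
    have := Multiset.prod_map_le_prod_map₀ (s := P.roots) (fun _ => ‖r‖) norm
      (fun _ _ => norm_nonneg _) (fun i hi => hmin i (by simpa using hi))
    simpa [hcard] using this
  rw [← hn] at h3
  linarith

/-- Roots of a monic polynomial are bounded by its coefficients. -/
theorem aux_root_bound (P : Polynomial ℂ) (hP : P.Monic) (ζ : ℂ) (h : P.eval ζ = 0) :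
    ‖ζ‖ ≤ 1 + ∑ i ∈ Finset.range P.natDegree, ‖P.coeff i‖ := by
  by_contra! H
  have hS : 0 ≤ ∑ i ∈ Finset.range P.natDegree, ‖P.coeff i‖ :=
    Finset.sum_nonneg fun _ _ => norm_nonneg _
  have h1 : 1 ≤ ‖ζ‖ := by linarith
  rw [Polynomial.eval_eq_sum_range, Finset.sum_range_succ, hP.coeff_natDegree, one_mul] at h
  have hd : P.natDegree ≠ 0 := by
    intro hd; rw [hd] at h; simp at h
  obtain ⟨d, hd⟩ := Nat.exists_eq_succ_of_ne_zero hd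
  have h2 : ‖ζ‖ ^ P.natDegree ≤ (∑ i ∈ Finset.range P.natDegree, ‖P.coeff i‖) * ‖ζ‖ ^ d := by
    rw [← norm_pow, eq_neg_of_add_eq_zero_right h, norm_neg, Finset.sum_mul]
    refine (norm_sum_le _ _).trans (Finset.sum_le_sum fun i hi => ?_)
    rw [norm_mul, norm_pow]
    gcongr
    rw [Finset.mem_range] at hi; omega
  rw [hd, pow_succ'] at h2
  have : 0 < ‖ζ‖ ^ d := by positivity
  have := le_of_mul_le_mul_right h2 this
  rw [← hd] at this
  linarith

/-- The kernel of evaluation at `p` is generated by the `X i - C (p i)`. -/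
theorem aux_ker_eval {n : ℕ} (p : Fin n → ℂ) :
    Ideal.span (Set.range fun i : Fin n => (X i - C (p i) : MvPolynomial (Fin n) ℂ)) =
      RingHom.ker (eval p) := by
  apply le_antisymm
  · rw [Ideal.span_le]
    rintro _ ⟨i, rfl⟩
    simp [RingHom.mem_ker]
  · intro h hh
    rw [RingHom.mem_ker] at hh
    set J := Ideal.span (Set.range fun i : Fin n => (X i - C (p i) : MvPolynomial (Fin n) ℂ))
    have : ∀ h : MvPolynomial (Fin n) ℂ, Ideal.Quotient.mk J h = Ideal.Quotient.mk J (C (eval p h)) := by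
      intro h
      induction h using MvPolynomial.induction_on with
      | C a => simp
      | add a b ha hb => simp only [map_add, ha, hb]
      | mul_X a i ha =>
        simp only [map_mul, ha, eval_X]
        congr 1
        rw [Ideal.Quotient.eq]
        exact Ideal.subset_span ⟨i, rfl⟩
    rw [← Ideal.Quotient.eq_zero_iff_mem, this, hh]
    simp

instance aux_ker_eval_isMaximal {n : ℕ} (p : Fin n → ℂ) :
    (RingHom.ker (eval p : MvPolynomial (Fin n) ℂ →+* ℂ)).IsMaximal :=
  RingHom.ker_isMaximal_of_surjective _ fun c => ⟨C c, by simp⟩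

theorem aux_eq_ker_eval {n : ℕ} (Q : Ideal (MvPolynomial (Fin n) ℂ)) (hQ : Q.IsMaximal) :
    ∃ q : Fin n → ℂ, Q = RingHom.ker (eval q) := by
  obtain ⟨q, hq⟩ := (MvPolynomial.isMaximal_iff_eq_vanishingIdeal_singleton (I := Q)).mp hQ
  refine ⟨q, ?_⟩
  rw [hq]
  ext h
  simp [RingHom.mem_ker, MvPolynomial.aeval_eq_eval]

theorem aux_sep {k S A : Type*} [Field k] [CommRing S] [CommRing A] [Algebra k S] [Algebra k A]
    [Algebra S A] [IsScalarTower k S A] [Algebra.FiniteType k A] [Algebra.IsIntegral S A]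
    (M : Ideal A) [M.IsPrime] :
    ∃ r ∉ M, ∀ Q : Ideal A, Q.IsPrime → Q ≠ M →
      Q.comap (algebraMap S A) = M.comap (algebraMap S A) → r ∈ Q := by
  have : M.LiesOver (M.under S) := ⟨rfl⟩
  have : Algebra.FiniteType S A := Algebra.FiniteType.of_restrictScalars_finiteType k S A
  have : Module.Finite S A := Algebra.IsIntegral.finite
  obtain ⟨r, hr, h⟩ := Ideal.exists_not_mem_forall_mem_of_ne_of_liesOver (M.under S) M
  exact ⟨r, hr, fun Q hQ hne he => h Q hQ hne ⟨he.symm⟩⟩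

/-- A point of an irreducible variety of positive dimension is not isolated. -/
theorem aux_not_isolated {n : ℕ} (P : Ideal (MvPolynomial (Fin n) ℂ)) [hPp : P.IsPrime]
    (p : Fin n → ℂ) (hPm : P < RingHom.ker (eval p)) (ε : ℝ) (hε : 0 < ε) :
    ∃ y : Fin n → ℂ, dist y p < ε ∧ (∀ h ∈ P, eval y h = 0) ∧ y ≠ p := by
  obtain ⟨s, -, g, ginj, gint⟩ := exists_integral_inj_algHom_of_quotient P hPp.ne_top
  let A := MvPolynomial (Fin n) ℂ ⧸ P
  let S := MvPolynomial (Fin s) ℂ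
  let : Algebra S A := g.toRingHom.toAlgebra
  have : FaithfulSMul S A := (faithfulSMul_iff_algebraMap_injective S A).mpr ginj
  have : Algebra.IsIntegral S A := ⟨gint⟩
  have : IsScalarTower ℂ S A := IsScalarTower.of_algebraMap_eq' g.comp_algebraMap.symm
  have hgal : ∀ r : S, algebraMap S A r = g r := fun r => rfl
  let π : MvPolynomial (Fin n) ℂ →+* A := Ideal.Quotient.mk P
  have hπ : Function.Surjective π := Ideal.Quotient.mk_surjective
  -- evaluation at points
  let ev : ∀ q : Fin n → ℂ, (∀ h ∈ P, eval q h = 0) → A →+* ℂ :=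
    fun q hq => Ideal.Quotient.lift P (eval q) hq
  have hev : ∀ q hq h, ev q hq (π h) = eval q h := fun q hq h => Ideal.Quotient.lift_mk _ _ _
  have hevC : ∀ q hq (c : ℂ), ev q hq (algebraMap S A (C c)) = c := by
    intro q hq c
    have : algebraMap S A (C c) = π (C c) := by
      rw [hgal]; exact g.commutes c
    rw [this, hev]; simp
  let pt : ∀ q : Fin n → ℂ, (∀ h ∈ P, eval q h = 0) → Fin s → ℂ :=
    fun q hq i => ev q hq (algebraMap S A (X i))
  have hevS : ∀ q hq (r : S), ev q hq (algebraMap S A r) = eval (pt q hq) r := by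
    intro q hq r
    induction r using MvPolynomial.induction_on with
    | C a => rw [hevC]; simp
    | add a b ha hb => simp only [map_add, ha, hb]
    | mul_X a i ha => simp only [map_mul, ha, eval_X]; rfl
  have hp : ∀ h ∈ P, eval p h = 0 := fun h hh => hPm.le hh
  let M : Ideal A := RingHom.ker (ev p hp)
  have evsurj : ∀ q hq, Function.Surjective (ev q hq) := fun q hq c =>
    ⟨algebraMap S A (C c), hevC q hq c⟩
  have hM : M.IsMaximal := RingHom.ker_isMaximal_of_surjective _ (evsurj p hp)
  have hMbot : M ≠ ⊥ := by
    obtain ⟨h, hh, hhP⟩ := SetLike.exists_of_lt hPm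
    intro hb
    have : π h ∈ M := by
      rw [RingHom.mem_ker, hev]; exact hh
    rw [hb, Ideal.mem_bot] at this
    exact hhP (Ideal.Quotient.eq_zero_iff_mem.mp this)
  have hs : s ≠ 0 := by
    rintro rfl
    have hS : IsField S := (MvPolynomial.isEmptyRingEquiv ℂ (Fin 0)).toMulEquiv.isField (Field.toIsField ℂ)
    have hA : IsField A := isField_of_isIntegral_of_isField' hS
    let := hA.toField
    exact hMbot (Ideal.eq_bot_of_prime M)
  let p0 := pt p hp
  have hfin : Algebra.FiniteType ℂ A := inferInstance
  obtain ⟨sep, hsepM, hsep⟩ := aux_sep (k := ℂ) (S := S) (A := A) M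
  let c := ev p hp sep
  have hc : c ≠ 0 := hsepM
  let z : A := 1 - algebraMap S A (C c⁻¹) * sep
  have hz : IsIntegral S z := Algebra.IsIntegral.isIntegral z
  have hzp : ev p hp z = 0 := by
    simp only [z, map_sub, map_mul, hevC, map_one]
    change 1 - c⁻¹ * c = 0
    rw [inv_mul_cancel₀ hc, sub_self]
  let Φ := minpoly S z
  have hΦ : Φ.Monic := minpoly.monic hz
  have hdeg : Φ.natDegree ≠ 0 := (minpoly.natDegree_pos hz).ne'
  have hΦ0 : eval p0 (Φ.coeff 0) = 0 := by
    have h1 : Polynomial.eval₂ ((ev p hp).comp (algebraMap S A)) (ev p hp z) Φ = 0 := by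
      rw [← Polynomial.hom_eval₂]
      have := minpoly.aeval S z
      rw [Polynomial.aeval_def] at this
      rw [this, map_zero]
    rw [hzp, Polynomial.eval₂_at_zero] at h1
    rw [← hevS]; exact h1
  -- the approximating points
  let yk : ℕ → Fin s → ℂ := fun k i => p0 i + 1 / ((k : ℂ) + 1)
  have hyk : Filter.Tendsto yk Filter.atTop (nhds p0) := by
    rw [tendsto_pi_nhds]
    intro i
    have := (tendsto_one_div_add_atTop_nhds_zero_nat (𝕜 := ℂ)).const_add (p0 i)
    rw [add_zero] at this
    exact this
  have hykne : ∀ k, yk k ≠ p0 := by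
    intro k h
    have := congrFun h ⟨0, Nat.pos_of_ne_zero hs⟩
    simp only [yk] at this
    have h2 : (1 : ℂ) / ((k : ℂ) + 1) = 0 := by simpa using this
    have h3 : ((k : ℂ) + 1) ≠ 0 := by exact_mod_cast Nat.succ_ne_zero k
    simp [h3] at h2
  have hcont : ∀ r : S, Filter.Tendsto (fun k => eval (yk k) r) Filter.atTop (nhds (eval p0 r)) :=
    fun r => ((MvPolynomial.continuous_eval r).tendsto p0).comp hyk
  have hex : ∀ k, ∃ ζ, (Φ.map (eval (yk k))).eval ζ = 0 ∧
      ‖ζ‖ ^ Φ.natDegree ≤ ‖eval (yk k) (Φ.coeff 0)‖ := by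
    intro k
    have := aux_small_root (Φ.map (eval (yk k))) (hΦ.map _) (by rwa [hΦ.natDegree_map])
    rwa [hΦ.natDegree_map, Polynomial.coeff_map] at this
  choose ζ hζroot hζ using hex
  have hζlim : Filter.Tendsto ζ Filter.atTop (nhds 0) := by
    have h1 : Filter.Tendsto (fun k => ‖ζ k‖ ^ Φ.natDegree) Filter.atTop (nhds 0) := by
      refine squeeze_zero (fun k => by positivity) hζ ?_
      have := (hcont (Φ.coeff 0)).norm
      rwa [hΦ0, norm_zero] at this
    rw [tendsto_zero_iff_norm_tendsto_zero]
    rw [Metric.tendsto_atTop] at h1 ⊢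
    intro δ hδ
    obtain ⟨K, hK⟩ := h1 (δ ^ Φ.natDegree) (by positivity)
    refine ⟨K, fun k hk => ?_⟩
    have := hK k hk
    simp only [dist_zero_right, norm_pow, norm_norm] at this ⊢
    exact lt_of_pow_lt_pow_left₀ _ hδ.le this
  have hqex : ∀ k, ∃ (q : Fin n → ℂ) (hq : ∀ h ∈ P, eval q h = 0), pt q hq = yk k ∧
      ev q hq z = ζ k := by
    intro k
    obtain ⟨Q, hQ, hQ1, hQ2⟩ := aux_maximal_over z (yk k) (ζ k) (hζroot k)
    have : (Q.comap π).IsMaximal := Ideal.comap_isMaximal_of_surjective π hπ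
    obtain ⟨q, hq⟩ := aux_eq_ker_eval (Q.comap π) inferInstance
    have hqP : ∀ h ∈ P, eval q h = 0 := by
      intro h hh
      have : h ∈ Q.comap π := by
        rw [Ideal.mem_comap, show π h = 0 from Ideal.Quotient.eq_zero_iff_mem.mpr hh]
        exact Q.zero_mem
      rw [hq] at this
      exact this
    have hQev : ∀ a ∈ Q, ev q hqP a = 0 := by
      intro a ha
      obtain ⟨h, rfl⟩ := hπ a
      rw [hev]
      have : h ∈ Q.comap π := ha
      rw [hq] at this
      exact this
    refine ⟨q, hqP, ?_, ?_⟩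
    · funext i
      have := hQev _ (hQ1 (X i - C (yk k i)) (by simp))
      rw [map_sub, map_sub, hevC, sub_eq_zero] at this
      exact this
    · have := hQev _ hQ2
      rwa [map_sub, hevC, sub_eq_zero] at this
  choose q hqP hqy hqz using hqex
  -- boundedness
  have hbdd : ∀ i, ∃ B : ℝ, ∀ k, ‖q k i‖ ≤ B := by
    intro i
    obtain ⟨Ψ, hΨ, hΨ0⟩ := (Algebra.IsIntegral.isIntegral (R := S) (π (X i)) : IsIntegral S (π (X i)))
    have hlim : Filter.Tendsto (fun k => 1 + ∑ j ∈ Finset.range Ψ.natDegree, ‖eval (yk k) (Ψ.coeff j)‖)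
        Filter.atTop (nhds (1 + ∑ j ∈ Finset.range Ψ.natDegree, ‖eval p0 (Ψ.coeff j)‖)) :=
      (tendsto_finsetSum _ fun j _ => (hcont (Ψ.coeff j)).norm).const_add 1
    obtain ⟨B, hB⟩ := hlim.bddAbove_range
    refine ⟨B, fun k => le_trans ?_ (hB ⟨k, rfl⟩)⟩
    have := aux_root_bound (Ψ.map (eval (yk k))) (hΨ.map _) (q k i) (by
      have h1 := congrArg (ev (q k) (hqP k)) hΨ0
      rw [Polynomial.hom_eval₂, map_zero, hev, eval_X] at h1
      rw [Polynomial.eval_map, ← h1]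
      congr 1
      ext r
      · simp [hevC]
      · simp [hevS, hqy])
    simpa [hΨ.natDegree_map, Polynomial.coeff_map] using this
  choose B hB using hbdd
  have hbd : Bornology.IsBounded (Set.range q) := by
    rw [isBounded_iff_forall_norm_le]
    refine ⟨∑ i, |B i|, ?_⟩
    rintro _ ⟨k, rfl⟩
    rw [pi_norm_le_iff_of_nonneg (Finset.sum_nonneg fun _ _ => abs_nonneg _)]
    intro i
    exact ((hB i k).trans (le_abs_self _)).trans
      (Finset.single_le_sum (f := fun i => |B i|) (fun _ _ => abs_nonneg _) (Finset.mem_univ i))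
  obtain ⟨a, -, φ, hφ, hlim⟩ := tendsto_subseq_of_bounded hbd (fun k => Set.mem_range_self k)
  have hlimh : ∀ h : MvPolynomial (Fin n) ℂ,
      Filter.Tendsto (fun k => eval (q (φ k)) h) Filter.atTop (nhds (eval a h)) :=
    fun h => ((MvPolynomial.continuous_eval h).tendsto a).comp hlim
  have haP : ∀ h ∈ P, eval a h = 0 := by
    intro h hh
    refine tendsto_nhds_unique (hlimh h) ?_
    simp only [hqP _ h hh]
    exact tendsto_const_nhds
  have hlimA : ∀ b : A, Filter.Tendsto (fun k => ev (q (φ k)) (hqP _) b) Filter.atTop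
      (nhds (ev a haP b)) := by
    intro b
    obtain ⟨h, rfl⟩ := hπ b
    simp only [hev]
    exact hlimh h
  have hapt : pt a haP = p0 := by
    funext i
    refine tendsto_nhds_unique (hlimA (algebraMap S A (X i))) ?_
    have h1 := (hcont (X i)).comp hφ.tendsto_atTop
    simp only [eval_X] at h1
    refine h1.congr fun k => ?_
    simp [hevS, hqy]
  have haz : ev a haP z = 0 := by
    refine tendsto_nhds_unique (hlimA z) ?_
    simp only [hqz]
    exact hζlim.comp hφ.tendsto_atTop
  have haM : RingHom.ker (ev a haP) = M := by
    by_contra hne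
    have : (RingHom.ker (ev a haP)).IsMaximal :=
      RingHom.ker_isMaximal_of_surjective _ (evsurj a haP)
    have h1 := hsep (RingHom.ker (ev a haP)) inferInstance hne (by
      ext r
      simp only [M, Ideal.mem_comap, RingHom.mem_ker, hevS, hapt]
      rfl)
    rw [RingHom.mem_ker] at h1
    simp [z, h1] at haz
  have hap : a = p := by
    funext i
    have h1 : π (X i - C (p i)) ∈ M := by
      rw [RingHom.mem_ker, hev]; simp
    rw [← haM, RingHom.mem_ker, hev] at h1
    simpa [sub_eq_zero] using h1
  rw [hap] at hlim
  obtain ⟨K, hK⟩ := (Metric.tendsto_atTop.mp hlim) ε hε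
  refine ⟨q (φ K), hK K le_rfl, hqP _, ?_⟩
  intro h
  apply hykne (φ K)
  rw [← hqy]
  funext i
  change ev _ _ _ = ev _ _ _
  congr 1
  simp only [h]

theorem aux_quasiFiniteAt {k B : Type*} [Field k] [CommRing B] [Algebra k B]
    [Algebra.FiniteType k B] (J : Ideal B) [hJ : J.IsMaximal]
    (h : ∀ Q : Ideal B, Q.IsPrime → Q ≤ J → Q = J) : Algebra.QuasiFiniteAt k J := by
  have : IsNoetherianRing B := Algebra.FiniteType.isNoetherianRing k B
  have : IsJacobsonRing B := isJacobsonRing_of_finiteType (A := k)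
  refine Algebra.QuasiFiniteAt.of_isOpen_singleton (R := k) ⟨J, inferInstance⟩ ?_
  refine ((PrimeSpectrum.isOpen_singleton_tfae_of_isNoetherian_of_isJacobsonRing
    (⟨J, inferInstance⟩ : PrimeSpectrum B)).out 0 2 rfl rfl).mpr ?_
  refine ⟨(PrimeSpectrum.isClosed_singleton_iff_isMaximal _).mpr hJ, ?_⟩
  intro x y hxy hx
  rw [Set.mem_singleton_iff] at hx ⊢
  subst hx
  rw [← PrimeSpectrum.le_iff_specializes] at hxy
  exact PrimeSpectrum.ext (h y.asIdeal y.2 hxy)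

theorem aux_finite {k B : Type*} [Field k] [CommRing B] [Algebra k B]
    [Algebra.FiniteType k B] (J : Ideal B) [hJ : J.IsMaximal]
    (h : ∀ Q : Ideal B, Q.IsPrime → Q ≤ J → Q = J) :
    Module.Finite k (Localization.AtPrime J) :=
  have := aux_quasiFiniteAt (k := k) J h
  .of_quasiFinite

theorem aux_isolate {k B : Type*} [Field k] [CommRing B] [Algebra k B]
    [Algebra.FiniteType k B] (J : Ideal B) [hJ : J.IsMaximal]
    (h : ∀ Q : Ideal B, Q.IsPrime → Q ≤ J → Q = J) :
    ∃ s ∉ J, ∀ Q : Ideal B, Q.IsPrime → s ∉ Q → Q = J := by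
  have := aux_quasiFiniteAt (k := k) J h
  obtain ⟨f, hf, hf2⟩ := Algebra.QuasiFiniteAt.exists_basicOpen_eq_singleton (R := k) J
  refine ⟨f, hf, fun Q hQ hfQ => ?_⟩
  have : (⟨Q, hQ⟩ : PrimeSpectrum B) ∈ (PrimeSpectrum.basicOpen f : Set (PrimeSpectrum B)) := hfQ
  rw [hf2] at this
  exact congrArg PrimeSpectrum.asIdeal this

/-- Quasi-finiteness of `A` over `k[T]`, `T ↦ g`, at a maximal ideal isolated in `V(g)`. -/
theorem aux_quasiFiniteAt_fiber {k R A : Type*} [Field k] [CommRing R] [CommRing A] [Algebra k A]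
    [Algebra k R] [Algebra R A] [IsScalarTower k R A]
    [Algebra.FiniteType k A] (t : R) (M : Ideal A) [hM : M.IsMaximal]
    (htM : algebraMap R A t ∈ M)
    (h : ∀ Q : Ideal A, Q.IsPrime → algebraMap R A t ∈ Q → Q ≤ M → Q = M) :
    Algebra.QuasiFiniteAt R M := by
  have : Algebra.FiniteType R A := Algebra.FiniteType.of_restrictScalars_finiteType k R A
  let g := algebraMap R A t
  -- isolate in the quotient
  let B := A ⧸ Ideal.span {g}
  let π : A →+* B := Ideal.Quotient.mk _
  have hπ : Function.Surjective π := Ideal.Quotient.mk_surjective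
  have hker : RingHom.ker π ≤ M := by
    rw [Ideal.mk_ker, Ideal.span_le]
    simpa using htM
  have hMm : (M.map π).IsMaximal := by
    refine (Ideal.map_eq_top_or_isMaximal_of_surjective π hπ hM).resolve_left fun htop => hM.ne_top ?_
    have h1 := Ideal.comap_map_of_surjective π hπ M
    rw [htop, Ideal.comap_top, ← RingHom.ker_eq_comap_bot, sup_eq_left.mpr hker] at h1
    exact h1.symm
  have hcomap : (M.map π).comap π = M := by
    rw [Ideal.comap_map_of_surjective π hπ, ← RingHom.ker_eq_comap_bot, sup_eq_left]
    exact hker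
  have hg : ∀ Q : Ideal B, g ∈ Q.comap π := by
    intro Q
    rw [Ideal.mem_comap, show π g = 0 from
      Ideal.Quotient.eq_zero_iff_mem.mpr (Ideal.mem_span_singleton_self g)]
    exact Q.zero_mem
  obtain ⟨s, hs, hsQ⟩ := aux_isolate (k := k) (M.map π) (fun Q hQ hle => by
    have h1 := h (Q.comap π) inferInstance (hg Q) (by
      rw [← hcomap]; exact Ideal.comap_mono hle)
    rw [← h1, Ideal.map_comap_of_surjective π hπ])
  obtain ⟨s, rfl⟩ := hπ s
  refine Algebra.QuasiFiniteAt.of_isOpen_singleton_fiber (R := R) ⟨M, inferInstance⟩ ?_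
  refine ⟨PrimeSpectrum.basicOpen s, (PrimeSpectrum.basicOpen s).2, ?_⟩
  ext ⟨Q, hQ⟩
  simp only [Set.mem_preimage, Set.mem_singleton_iff]
  constructor
  · intro hsQ'
    have hgQ : g ∈ Q.asIdeal := by
      have h1 : PrimeSpectrum.comap (algebraMap R A) Q = PrimeSpectrum.comap (algebraMap R A) ⟨M, inferInstance⟩ := hQ
      have h2 : t ∈ (PrimeSpectrum.comap (algebraMap R A) Q).asIdeal := by
        rw [h1]; exact htM
      exact h2
    have hkerQ : RingHom.ker π ≤ Q.asIdeal := by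
      rw [Ideal.mk_ker, Ideal.span_le]
      simpa using hgQ
    have hQp : (Q.asIdeal.map π).IsPrime := Ideal.map_isPrime_of_surjective hπ hkerQ
    have hcQ : (Q.asIdeal.map π).comap π = Q.asIdeal := by
      rw [Ideal.comap_map_of_surjective π hπ, ← RingHom.ker_eq_comap_bot, sup_eq_left]
      exact hkerQ
    have h3 := hsQ _ hQp (fun h4 => by
      have : s ∈ (Q.asIdeal.map π).comap π := h4
      rw [hcQ] at this
      exact hsQ' this)
    refine Subtype.ext (PrimeSpectrum.ext ?_)
    change Q.asIdeal = M
    rw [← hcQ, h3, hcomap]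
  · intro hQM
    have hQM' : Q = ⟨M, inferInstance⟩ := congrArg Subtype.val hQM
    rw [hQM']
    change s ∉ M
    intro h4
    exact hs (Ideal.mem_map_of_mem π h4)

/-- Height of the ideal of a point. -/
theorem aux_height {n : ℕ} (p : Fin n → ℂ) :
    (n : ℕ∞) ≤ (RingHom.ker (eval p : MvPolynomial (Fin n) ℂ →+* ℂ)).height := by
  let θ : ℕ → MvPolynomial (Fin n) ℂ →ₐ[ℂ] MvPolynomial (Fin n) ℂ := fun k =>
    aeval fun i : Fin n => if i.1 < k then C (p i) else X i
  have hlt : ∀ k, k < n → RingHom.ker (θ k) < RingHom.ker (θ (k + 1)) := by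
    intro k hk
    have hcomp : θ (k + 1) = (θ (k + 1)).comp (θ k) := by
      ext i
      simp only [θ, aeval_X, AlgHom.comp_apply]
      by_cases h : i.1 < k
      · simp [h, Nat.lt_succ_of_lt h, MvPolynomial.algHom_C]
      · simp [h]
    refine lt_of_le_of_ne ?_ ?_
    · intro h hh
      rw [RingHom.mem_ker] at hh ⊢
      rw [hcomp, AlgHom.comp_apply, hh, map_zero]
    · intro he
      have h1 : (X ⟨k, hk⟩ - C (p ⟨k, hk⟩) : MvPolynomial (Fin n) ℂ) ∈ RingHom.ker (θ (k + 1)) := by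
        simp [RingHom.mem_ker, θ, MvPolynomial.algHom_C]
      rw [← he, RingHom.mem_ker] at h1
      simp only [θ, map_sub, aeval_X, lt_irrefl, if_false, MvPolynomial.algHom_C] at h1
      have h2 := congrArg (eval fun _ => p ⟨k, hk⟩ + 1) h1
      simp [MvPolynomial.algebraMap_eq] at h2
  have hh : ∀ k, k ≤ n → (k : ℕ∞) ≤ (RingHom.ker (θ k)).height := by
    intro k
    induction k with
    | zero => simp
    | succ k ih =>
      intro hk
      have : (RingHom.ker (θ k)).IsPrime := RingHom.ker_isPrime (θ k).toRingHom
      have : (RingHom.ker (θ (k + 1))).IsPrime := RingHom.ker_isPrime (θ (k + 1)).toRingHom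
      have h1 := Ideal.height_add_one_le_of_lt_of_isPrime (hlt k hk)
      refine le_trans ?_ h1
      push_cast
      gcongr
      exact ih (by omega)
  refine (hh n le_rfl).trans (Ideal.height_mono ?_)
  intro h hh
  rw [RingHom.mem_ker] at hh ⊢
  have h1 : (θ n h) = C (eval p h) := by
    have : θ n = (Algebra.ofId ℂ _).comp (aeval p) := by
      ext i
      simp [θ, Algebra.ofId_apply, MvPolynomial.algebraMap_eq]
    rw [this, AlgHom.comp_apply, Algebra.ofId_apply, MvPolynomial.algebraMap_eq, MvPolynomial.aeval_eq_eval]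
  rw [h1] at hh
  exact (MvPolynomial.C_eq_zero).mp hh


/-- A discrete valuation ring over `ℂ` with residue field `ℂ` embeds in `ℂ⟦X⟧`. -/
theorem aux_dvr_embed {D : Type*} [CommRing D] [IsDomain D] [IsDiscreteValuationRing D]
    [Algebra ℂ D] (hres : ∀ d : D, ∃ c : ℂ, d - algebraMap ℂ D c ∈ IsLocalRing.maximalIdeal D) :
    ∃ Θ : D →ₐ[ℂ] PowerSeries ℂ, Function.Injective Θ ∧
      ∀ d ∈ IsLocalRing.maximalIdeal D, PowerSeries.constantCoeff (Θ d) = 0 := by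
  obtain ⟨t, ht⟩ := IsDiscreteValuationRing.exists_irreducible D
  have hmt : IsLocalRing.maximalIdeal D = Ideal.span {t} := ht.maximalIdeal_eq
  have ht0 : t ≠ 0 := ht.ne_zero
  -- the residue map
  obtain ⟨r, hr⟩ : ∃ r : D →ₐ[ℂ] ℂ, ∀ d, r d = 0 ↔ d ∈ IsLocalRing.maximalIdeal D := by
    let κ := D ⧸ IsLocalRing.maximalIdeal D
    have hb : Function.Bijective (Algebra.ofId ℂ κ) := by
      refine ⟨?_, ?_⟩
      · have : Nontrivial κ := Ideal.Quotient.nontrivial_iff.mpr (IsLocalRing.maximalIdeal.isMaximal D).ne_top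
        exact (algebraMap ℂ κ).injective
      · intro x
        obtain ⟨d, rfl⟩ := Ideal.Quotient.mk_surjective x
        obtain ⟨c, hc⟩ := hres d
        exact ⟨c, (Ideal.Quotient.eq.mpr hc).symm⟩
    let e := AlgEquiv.ofBijective (Algebra.ofId ℂ κ) hb
    refine ⟨e.symm.toAlgHom.comp (Ideal.Quotient.mkₐ ℂ _), fun d => ?_⟩
    change e.symm (Ideal.Quotient.mk _ d) = 0 ↔ _
    rw [EmbeddingLike.map_eq_zero_iff, Ideal.Quotient.eq_zero_iff_mem]
  have hdiv : ∀ d, ∃ d', d = algebraMap ℂ D (r d) + t * d' := by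
    intro d
    have : d - algebraMap ℂ D (r d) ∈ IsLocalRing.maximalIdeal D := by
      rw [← hr]; simp
    rw [hmt, Ideal.mem_span_singleton] at this
    obtain ⟨d', hd'⟩ := this
    exact ⟨d', by rw [← hd']; ring⟩
  choose T hT using hdiv
  have hTu : ∀ d c d', d = algebraMap ℂ D c + t * d' → T d = d' := by
    intro d c d' h
    have hrt : r t = 0 := by rw [hr, hmt]; exact Ideal.mem_span_singleton_self t
    have hrd : r d = c := by rw [h]; simp [hrt]
    have h1 := hT d
    rw [hrd] at h1
    have h2 : t * T d = t * d' := by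
      have := h1.symm.trans h
      exact add_left_cancel this
    exact mul_left_cancel₀ ht0 h2
  have hTadd : ∀ a b, T (a + b) = T a + T b := by
    intro a b
    apply hTu _ (r a + r b)
    rw [map_add]
    linear_combination hT a + hT b
  have hTmul : ∀ a b, T (a * b) = T a * b + algebraMap ℂ D (r a) * T b := by
    intro a b
    apply hTu _ (r a * r b)
    rw [map_mul]
    linear_combination b * hT a + algebraMap ℂ D (r a) * hT b
  have hTC : ∀ c, T (algebraMap ℂ D c) = 0 := by
    intro c
    exact hTu _ c 0 (by simp)
  have hT0 : T 0 = 0 := by simpa using hTC 0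
  let φ : D → PowerSeries ℂ := fun d => PowerSeries.mk fun k => r (T^[k] d)
  have hφ0 : ∀ d, PowerSeries.coeff 0 (φ d) = r d := fun d => by simp [φ]
  have hφs : ∀ d k, PowerSeries.coeff (k + 1) (φ d) = PowerSeries.coeff k (φ (T d)) := by
    intro d k; simp [φ]
  have hφC : ∀ c, φ (algebraMap ℂ D c) = PowerSeries.C c := by
    have hit : ∀ k, T^[k] 0 = 0 := fun k => Function.iterate_fixed hT0 k
    intro c
    ext k
    cases k with
    | zero => rw [hφ0]; simp
    | succ k => rw [hφs, hTC]; simp [φ, hit]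
  have hφadd : ∀ a b, φ (a + b) = φ a + φ b := by
    intro a b
    ext k
    rw [map_add]
    induction k generalizing a b with
    | zero => simp only [hφ0, map_add]
    | succ k ih => simp only [hφs, hTadd, ih]
  have hφsplit : ∀ a, φ a = PowerSeries.C (r a) + PowerSeries.X * φ (T a) := by
    intro a
    ext k
    cases k with
    | zero => rw [hφ0]; simp
    | succ k => rw [hφs]; simp [PowerSeries.coeff_succ_X_mul]
  have hφmul : ∀ a b, φ (a * b) = φ a * φ b := by
    have : ∀ k a b, PowerSeries.coeff k (φ (a * b)) = PowerSeries.coeff k (φ a * φ b) := by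
      intro k
      induction k using Nat.strong_induction_on with
      | _ k ih =>
        intro a b
        cases k with
        | zero =>
          rw [hφ0, PowerSeries.coeff_zero_eq_constantCoeff_apply, map_mul]
          simp only [← PowerSeries.coeff_zero_eq_constantCoeff_apply, hφ0, map_mul]
        | succ k =>
          have hC : ∀ c b, PowerSeries.coeff k (φ (algebraMap ℂ D c * b)) =
              c * PowerSeries.coeff k (φ b) := by
            intro c b
            rw [ih k (Nat.lt_succ_self k), hφC, PowerSeries.coeff_C_mul]
          rw [hφs, hTmul, hφadd, map_add, hC, ih k (Nat.lt_succ_self k), hφsplit a, add_mul, map_add,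
            PowerSeries.coeff_C_mul, mul_assoc PowerSeries.X, PowerSeries.coeff_succ_X_mul, hφs]
          ring
    intro a b
    ext k
    exact this k a b
  let Θ : D →ₐ[ℂ] PowerSeries ℂ :=
    { toFun := φ
      map_one' := by simpa using hφC 1
      map_mul' := hφmul
      map_zero' := by simpa using hφC 0
      map_add' := hφadd
      commutes' := fun c => by
        rw [hφC]; rfl }
  have hΘt : Θ t = PowerSeries.X := by
    change φ t = _
    rw [hφsplit, hTu t 0 1 (by simp), show r t = 0 by
      rw [hr, hmt]; exact Ideal.mem_span_singleton_self t, show φ 1 = 1 from map_one Θ]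
    simp
  refine ⟨Θ, ?_, ?_⟩
  · rw [injective_iff_map_eq_zero]
    intro a ha
    by_contra hne
    obtain ⟨k, u, hu⟩ := IsDiscreteValuationRing.eq_unit_mul_pow_irreducible hne ht
    rw [hu, map_mul, map_pow, hΘt] at ha
    have h1 : IsUnit (Θ (u : D)) := u.isUnit.map Θ
    rcases mul_eq_zero.mp ha with h | h
    · exact h1.ne_zero h
    · exact pow_ne_zero k PowerSeries.X_ne_zero h
  · intro d hd
    rw [← PowerSeries.coeff_zero_eq_constantCoeff_apply]
    change PowerSeries.coeff 0 (φ d) = 0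
    rw [hφ0, hr]
    exact hd

theorem aux_residue {B D : Type*} [CommRing B] [CommRing D] [Algebra ℂ B] (q : Ideal B)
    [q.IsPrime] [Algebra B D] [IsLocalization.AtPrime D q] [IsLocalRing D] [Algebra ℂ D]
    [IsScalarTower ℂ B D] (hresB : ∀ b : B, ∃ c : ℂ, b - algebraMap ℂ B c ∈ q) (d : D) :
    ∃ c : ℂ, d - algebraMap ℂ D c ∈ IsLocalRing.maximalIdeal D := by
  obtain ⟨b, s, rfl⟩ := IsLocalization.exists_mk'_eq q.primeCompl d
  obtain ⟨cb, hcb⟩ := hresB b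
  obtain ⟨cs, hcs⟩ := hresB s
  have hcs0 : cs ≠ 0 := by
    rintro rfl
    rw [map_zero, sub_zero] at hcs
    exact s.2 hcs
  refine ⟨cb / cs, ?_⟩
  have hmem : b - algebraMap ℂ B (cb / cs) * s ∈ q := by
    have h3 : b - algebraMap ℂ B (cb / cs) * s =
        (b - algebraMap ℂ B cb) - algebraMap ℂ B (cb / cs) * (s - algebraMap ℂ B cs) := by
      have h4 : algebraMap ℂ B cb = algebraMap ℂ B (cb / cs) * algebraMap ℂ B cs := by
        rw [← map_mul, div_mul_cancel₀ _ hcs0]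
      rw [h4]; ring
    rw [h3]
    exact q.sub_mem hcb (q.mul_mem_left _ hcs)
  have h5 : (IsLocalization.mk' D b s - algebraMap ℂ D (cb / cs)) =
      IsLocalization.mk' D (b - algebraMap ℂ B (cb / cs) * s) s := by
    rw [IsLocalization.eq_mk'_iff_mul_eq, sub_mul, IsLocalization.mk'_spec, map_sub, map_mul,
      ← IsScalarTower.algebraMap_apply ℂ B D]
  rw [h5, IsLocalization.AtPrime.mk'_mem_maximal_iff D q]
  exact hmem

theorem aux_splits_root {C : Type*} [CommRing C] [IsDomain C] (φ : ℂ →+* C) (Q : Polynomial ℂ)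
    (hQ : Q.Monic) (x : C) (hroot : Q.eval₂ φ x = 0) : ∃ c : ℂ, x = φ c := by
  have hprod := (IsAlgClosed.splits Q).eq_prod_roots_of_monic hQ
  rw [← Polynomial.coe_eval₂RingHom, hprod, map_multiset_prod, Multiset.prod_eq_zero_iff] at hroot
  simp only [Multiset.map_map, Multiset.mem_map, Function.comp] at hroot
  obtain ⟨c, _, hc⟩ := hroot
  refine ⟨c, ?_⟩
  simpa [sub_eq_zero] using hc

theorem aux_resB {B : Type*} [CommRing B] [Algebra (Polynomial ℂ) B] [Algebra ℂ B]
    [IsScalarTower ℂ (Polynomial ℂ) B] (q : Ideal B) [q.IsPrime]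
    (hTq : algebraMap (Polynomial ℂ) B Polynomial.X ∈ q) (b : B) (hintg : IsIntegral (Polynomial ℂ) b) :
    ∃ c : ℂ, b - algebraMap ℂ B c ∈ q := by
  obtain ⟨P, hP, hPb⟩ := hintg
  let Q : Polynomial ℂ := P.map Polynomial.constantCoeff
  have hQ : Q.Monic := hP.map _
  have hcomp : ((Ideal.Quotient.mk q).comp (algebraMap (Polynomial ℂ) B)) =
      ((Ideal.Quotient.mk q).comp (algebraMap ℂ B)).comp Polynomial.constantCoeff := by
    refine Polynomial.ringHom_ext (fun c => ?_) ?_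
    · simp only [RingHom.comp_apply, Polynomial.constantCoeff_apply, Polynomial.coeff_C_zero]
      rw [IsScalarTower.algebraMap_apply ℂ (Polynomial ℂ) B]
      rfl
    · simp only [RingHom.comp_apply, Polynomial.constantCoeff_apply, Polynomial.coeff_X_zero,
        map_zero]
      exact Ideal.Quotient.eq_zero_iff_mem.mpr hTq
  have hroot : Q.eval₂ ((Ideal.Quotient.mk q).comp (algebraMap ℂ B)) (Ideal.Quotient.mk q b) = 0 := by
    rw [Polynomial.eval₂_map, ← hcomp, ← Polynomial.hom_eval₂, hPb, map_zero]
  obtain ⟨c, hc⟩ := aux_splits_root ((Ideal.Quotient.mk q).comp (algebraMap ℂ B)) Q hQ _ hroot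
  exact ⟨c, Ideal.Quotient.eq.mp hc⟩

theorem aux_val2 {K B D : Type} [Field K] [CommRing B] [IsDomain B] [Algebra B K]
    [IsFractionRing B K] [Algebra ℂ B] [Algebra ℂ K] [IsScalarTower ℂ B K]
    (V : ValuationSubring K) (hBV : ∀ b : B, algebraMap B K b ∈ V) (q : Ideal B) [q.IsPrime]
    (hmemq : ∀ b : B, b ∈ q ↔ algebraMap B K b ∈ V.nonunits)
    (hresB : ∀ b : B, ∃ c : ℂ, b - algebraMap ℂ B c ∈ q)
    [CommRing D] [Algebra B D] [IsLocalization.AtPrime D q] [IsDomain D]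
    [IsDiscreteValuationRing D] [Algebra ℂ D] [IsScalarTower ℂ B D] :
    ∃ (j : D →ₐ[ℂ] K)
      (Θ : D →ₐ[ℂ] PowerSeries ℂ), Function.Injective j ∧ Function.Injective Θ ∧
      (∀ x ∈ V, ∃ d, j d = x) ∧
      ∀ d, j d ∈ V.nonunits → PowerSeries.constantCoeff (Θ d) = 0 := by
  have hunit : ∀ y : q.primeCompl, IsUnit (algebraMap B K y) := by
    intro y
    refine IsUnit.mk0 _ fun h0 => y.2 ?_
    have : (y : B) = 0 := (IsFractionRing.injective B K) (by rw [h0, map_zero])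
    rw [this]
    exact q.zero_mem
  let jR : D →+* K := IsLocalization.lift (M := q.primeCompl) hunit
  have hjR : ∀ b, jR (algebraMap B D b) = algebraMap B K b := fun b => IsLocalization.lift_eq hunit b
  let j : D →ₐ[ℂ] K := { jR with
    commutes' := fun c => by
      change jR _ = _
      rw [IsScalarTower.algebraMap_apply ℂ B D, hjR, ← IsScalarTower.algebraMap_apply ℂ B K] }
  have hj : ∀ b, j (algebraMap B D b) = algebraMap B K b := hjR
  have hjinj : Function.Injective j := by
    have : Function.Injective jR := by
      refine IsLocalization.lift_injective_iff (M := q.primeCompl) hunit |>.mpr fun x y => ?_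
      rw [(IsLocalization.injective D q.primeCompl_le_nonZeroDivisors).eq_iff,
        (IsFractionRing.injective B K).eq_iff]
    exact this
  have hjm : ∀ d, d ∈ IsLocalRing.maximalIdeal D ↔ j d ∈ V.nonunits := by
    intro d
    obtain ⟨b, s, rfl⟩ := IsLocalization.exists_mk'_eq q.primeCompl d
    rw [IsLocalization.AtPrime.mk'_mem_maximal_iff D q, hmemq]
    have h1 : j (IsLocalization.mk' D b s) * algebraMap B K s = algebraMap B K b := by
      rw [← hj s, ← map_mul, IsLocalization.mk'_spec, hj]
    have h2 : V.valuation (algebraMap B K s) = 1 := by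
      refine le_antisymm ((V.valuation_le_one_iff _).mpr (hBV s)) (not_lt.mp fun h => s.2 ?_)
      exact (hmemq _).mpr h
    rw [ValuationSubring.mem_nonunits_iff, ValuationSubring.mem_nonunits_iff, ← h1, map_mul, h2,
      mul_one]
  obtain ⟨Θ, hΘ, hΘ0⟩ := aux_dvr_embed (D := D) (aux_residue q hresB)
  refine ⟨j, Θ, hjinj, hΘ, ?_, fun d hd => hΘ0 d ((hjm d).mpr hd)⟩
  intro x hx
  obtain ⟨a, b, hb, rfl⟩ := IsFractionRing.div_surjective (A := B) x
  have hb0 : algebraMap B K b ≠ 0 := by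
    rw [map_ne_zero_iff _ (IsFractionRing.injective B K)]
    exact nonZeroDivisors.ne_zero hb
  rcases ValuationRing.dvd_total (algebraMap B D b) (algebraMap B D a) with ⟨d, hd⟩ | ⟨d, hd⟩
  · refine ⟨d, ?_⟩
    have := congrArg j hd
    rw [map_mul, hj, hj] at this
    exact (eq_div_iff hb0).mpr (by rw [mul_comm]; exact this.symm)
  · have h1 := congrArg j hd
    rw [map_mul, hj, hj] at h1
    have h1' : algebraMap B K b = algebraMap B K a * j d := h1
    have ha0 : algebraMap B K a ≠ 0 := by
      intro h
      rw [h, zero_mul] at h1'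
      exact hb0 h1'
    have hjd : j d = (algebraMap B K a / algebraMap B K b)⁻¹ := by
      rw [inv_div, eq_div_iff ha0, mul_comm]; exact h1'.symm
    by_cases hdm : d ∈ IsLocalRing.maximalIdeal D
    · rw [hjm, hjd, ValuationSubring.inv_mem_nonunits_iff] at hdm
      rcases hdm with h | h
      · exact absurd h (div_ne_zero ha0 hb0)
      · exact absurd hx h
    · rw [IsLocalRing.mem_maximalIdeal, mem_nonunits_iff, not_not] at hdm
      obtain ⟨u, rfl⟩ := hdm
      refine ⟨(↑u⁻¹ : D), ?_⟩
      have h6 : j (↑u⁻¹ : D) * j (u : D) = 1 := by rw [← map_mul, Units.inv_mul, map_one]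
      rw [eq_inv_of_mul_eq_one_left h6, hjd, inv_inv]

theorem aux_val {K F : Type} [Field K] [Field F] [Algebra (Polynomial ℂ) F]
    [IsFractionRing (Polynomial ℂ) F] [Algebra (Polynomial ℂ) K] [Algebra F K]
    [IsScalarTower (Polynomial ℂ) F K] [Algebra ℂ K] [IsScalarTower ℂ (Polynomial ℂ) K]
    [FiniteDimensional F K]
    (V : ValuationSubring K) (hRV : ∀ r : Polynomial ℂ, algebraMap (Polynomial ℂ) K r ∈ V)
    (hT : algebraMap (Polynomial ℂ) K Polynomial.X ∈ V.nonunits) :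
    ∃ (D : Type) (_ : CommRing D) (_ : Algebra ℂ D) (j : D →ₐ[ℂ] K)
      (Θ : D →ₐ[ℂ] PowerSeries ℂ), Function.Injective j ∧ Function.Injective Θ ∧
      (∀ x ∈ V, ∃ d, j d = x) ∧
      ∀ d, j d ∈ V.nonunits → PowerSeries.constantCoeff (Θ d) = 0 := by
  classical
  have hchar : CharZero F := by
    have : CharZero (Polynomial ℂ) := inferInstance
    exact charZero_of_injective_algebraMap (IsFractionRing.injective (Polynomial ℂ) F)
  have hsep : Algebra.IsSeparable F K := inferInstance
  have hinjRK : Function.Injective (algebraMap (Polynomial ℂ) K) := by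
    rw [IsScalarTower.algebraMap_eq (Polynomial ℂ) F K]
    exact (algebraMap F K).injective.comp (IsFractionRing.injective (Polynomial ℂ) F)
  let B := integralClosure (Polynomial ℂ) K
  have : IsDedekindDomain B := integralClosure.isDedekindDomain (Polynomial ℂ) F K
  have : IsFractionRing B K :=
    IsIntegralClosure.isFractionRing_of_finite_extension (Polynomial ℂ) F K B
  have hBV : ∀ b : B, (b : K) ∈ V := by
    intro b
    obtain ⟨P, hP, hPb⟩ := b.2
    let RV : Polynomial ℂ →+* V := (algebraMap (Polynomial ℂ) K).codRestrict V hRV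
    have hintg : IsIntegral V (b : K) := by
      refine ⟨P.map RV, hP.map _, ?_⟩
      rw [Polynomial.eval₂_map]
      exact hPb
    obtain ⟨v, hv⟩ := IsIntegrallyClosed.isIntegral_iff.mp hintg
    rw [← hv]
    exact v.2
  let ι : B →+* V := (algebraMap B K).codRestrict V hBV
  let q : Ideal B := (IsLocalRing.maximalIdeal V).comap ι
  have hq : q.IsPrime := Ideal.comap_isPrime ι _
  have hmemq : ∀ b : B, b ∈ q ↔ (b : K) ∈ V.nonunits := by
    intro b
    rw [ValuationSubring.mem_nonunits_iff_exists_mem_maximalIdeal]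
    constructor
    · intro h
      exact ⟨hBV b, h⟩
    · rintro ⟨_, h⟩
      exact h
  have hTq : algebraMap (Polynomial ℂ) B Polynomial.X ∈ q := (hmemq _).mpr hT
  have hinjRB : Function.Injective (algebraMap (Polynomial ℂ) B) := by
    intro a b hab
    exact hinjRK (congrArg (algebraMap B K) hab)
  have hq0 : q ≠ ⊥ := by
    intro h
    rw [h, Ideal.mem_bot, map_eq_zero_iff _ hinjRB] at hTq
    exact Polynomial.X_ne_zero hTq
  have hresB : ∀ b : B, ∃ c : ℂ, b - algebraMap ℂ B c ∈ q := fun b =>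
    aux_resB q hTq b (Algebra.IsIntegral.isIntegral b)
  let D := Localization.AtPrime q
  have : IsDiscreteValuationRing D :=
    IsLocalization.AtPrime.isDiscreteValuationRing_of_dedekind_domain B hq0 D
  exact ⟨D, inferInstance, inferInstance, aux_val2 (B := B) (D := D) V hBV q hmemq hresB⟩

theorem aux_frac_finite {R A K F : Type*} [CommRing R] [IsDomain R] [CommRing A] [IsDomain A]
    [Field K] [Field F] [Algebra R A] [Algebra A K] [IsFractionRing A K] [Algebra R K]
    [IsScalarTower R A K] [Algebra R F] [IsFractionRing R F] [Algebra F K] [IsScalarTower R F K]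
    (M : Ideal A) [M.IsPrime] [h : Algebra.QuasiFiniteAt R M] : Module.Finite F K := by
  have h1 : Algebra.QuasiFiniteAt R (⊥ : Ideal A) := 
    Algebra.QuasiFiniteAt.of_le (Q := M) bot_le
  have h2 : IsLocalization (⊥ : Ideal A).primeCompl K := by
    rw [Ideal.primeCompl_bot]; infer_instance
  let e := IsLocalization.algEquiv (⊥ : Ideal A).primeCompl (Localization.AtPrime (⊥ : Ideal A)) K
  have h1' : Algebra.QuasiFinite R (Localization.AtPrime (⊥ : Ideal A)) := h1
  have h3 : Algebra.QuasiFinite R K :=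
    Algebra.QuasiFinite.of_surjective_algHom (e.toAlgHom.restrictScalars R) e.surjective
  have h4 : Algebra.QuasiFinite F K := Algebra.QuasiFinite.of_restrictScalars R F K
  exact .of_quasiFinite

theorem aux_curve {A : Type} (K : Type) [CommRing A] [IsDomain A] [Algebra ℂ A] [Algebra.FiniteType ℂ A]
    [Field K] [Algebra A K] [IsFractionRing A K] [Algebra ℂ K] [IsScalarTower ℂ A K]
    (M : Ideal A) [hM : M.IsMaximal] (g : A) (hg : g ∈ M) (hg0 : g ≠ 0)
    (h : ∀ Q : Ideal A, Q.IsPrime → g ∈ Q → Q ≤ M → Q = M) :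
    ∃ φ : A →ₐ[ℂ] PowerSeries ℂ, Function.Injective φ ∧
      ∀ a ∈ M, PowerSeries.constantCoeff (φ a) = 0 := by
  let R := Polynomial ℂ
  let : Algebra R A := (Polynomial.aeval g).toAlgebra
  have hX : algebraMap R A Polynomial.X = g := Polynomial.aeval_X g
  have : IsScalarTower ℂ R A := IsScalarTower.of_algebraMap_eq fun c =>
    (Polynomial.aeval_C g c).symm
  have hinj : Function.Injective (algebraMap R A) := by
    rw [injective_iff_map_eq_zero]
    intro P hP
    by_contra hP0
    have hP1 : Polynomial.eval₂ (algebraMap ℂ A) g P = 0 := hP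
    obtain ⟨c, hc⟩ := aux_splits_root (algebraMap ℂ A) (P * Polynomial.C P.leadingCoeff⁻¹)
      (Polynomial.monic_mul_leadingCoeff_inv hP0) g (by
        rw [Polynomial.eval₂_mul, hP1, zero_mul])
    by_cases hc0 : c = 0
    · rw [hc0, map_zero] at hc
      exact hg0 hc
    · refine hM.ne_top (Ideal.eq_top_of_isUnit_mem M hg ?_)
      rw [hc]
      exact (IsUnit.mk0 c hc0).map (algebraMap ℂ A)
  have hqf : Algebra.QuasiFiniteAt R M := aux_quasiFiniteAt_fiber (k := ℂ) (R := R)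
    Polynomial.X M (by rw [hX]; exact hg) (by rw [hX]; exact h)
  have hinjAK : Function.Injective (algebraMap A K) := IsFractionRing.injective A K
  let : Algebra R K := ((algebraMap A K).comp (algebraMap R A)).toAlgebra
  have : IsScalarTower R A K := IsScalarTower.of_algebraMap_eq fun _ => rfl
  have hinjRK : Function.Injective (algebraMap R K) := hinjAK.comp hinj
  have : FaithfulSMul R K := (faithfulSMul_iff_algebraMap_injective R K).mpr hinjRK
  let F := FractionRing R
  let : Algebra F K := FractionRing.liftAlgebra R K
  have : IsScalarTower R F K := FractionRing.isScalarTower_liftAlgebra R K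
  have hfin : Module.Finite F K := aux_frac_finite (R := R) (A := A) M
  have : IsScalarTower ℂ R K := IsScalarTower.of_algebraMap_eq fun c => by
    rw [IsScalarTower.algebraMap_apply ℂ A K, IsScalarTower.algebraMap_apply ℂ R A]
    rfl
  -- the valuation ring
  let S : Subring K := (algebraMap A K).range
  let ρ : A →+* S := (algebraMap A K).rangeRestrict
  have hρ : Function.Bijective ρ :=
    ⟨fun a b hab => hinjAK (congrArg Subtype.val hab), (algebraMap A K).rangeRestrict_surjective⟩
  let eρ : A ≃+* S := RingEquiv.ofBijective ρ hρ
  obtain ⟨V, hSV, hIV⟩ := Ideal.image_subset_nonunits_valuationSubring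
    (M.comap (eρ.symm : S →+* A)) (Ideal.comap_ne_top _ hM.ne_top)
  have hAV : ∀ a, algebraMap A K a ∈ V := fun a => hSV ⟨a, rfl⟩
  have hMV : ∀ a ∈ M, algebraMap A K a ∈ V.nonunits := by
    intro a ha
    refine hIV ⟨eρ a, ?_, rfl⟩
    change eρ.symm (eρ a) ∈ M
    rw [RingEquiv.symm_apply_apply]
    exact ha
  obtain ⟨D, _, _, j, Θ, hj, hΘ, hVj, hconst⟩ := aux_val (K := K) (F := F) V
    (fun r => hAV (algebraMap R A r)) (by
      have := hMV g hg
      rw [← hX] at this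
      exact this)
  let α : A →ₐ[ℂ] j.range := (Algebra.algHom ℂ A K).codRestrict j.range
    (fun a => hVj _ (hAV a))
  let e := AlgEquiv.ofInjective j hj
  let β : A →ₐ[ℂ] D := e.symm.toAlgHom.comp α
  have hβ : ∀ a, j (β a) = algebraMap A K a := by
    intro a
    have : e (β a) = α a := e.apply_symm_apply (α a)
    exact congrArg Subtype.val this
  refine ⟨Θ.comp β, hΘ.comp ?_, fun a ha => hconst _ ?_⟩
  · intro a b hab
    apply hinjAK
    have hab2 : β a = β b := hab
    rw [← hβ, ← hβ, hab2]
  · have hm := hMV a ha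
    rw [← hβ] at hm
    exact hm

theorem aux_curve2 {n : ℕ} (p : Fin n → ℂ) (P : Ideal (MvPolynomial (Fin n) ℂ)) [P.IsPrime]
    (hPm : P ≤ RingHom.ker (eval p)) (g : MvPolynomial (Fin n) ℂ) (hgm : eval p g = 0)
    (hgP : g ∉ P)
    (h : ∀ Q : Ideal (MvPolynomial (Fin n) ℂ), Q.IsPrime → P ≤ Q → g ∈ Q →
      Q ≤ RingHom.ker (eval p) → Q = RingHom.ker (eval p)) :
    ∃ φ : MvPolynomial (Fin n) ℂ →ₐ[ℂ] PowerSeries ℂ, (∀ a ∈ P, φ a = 0) ∧ φ g ≠ 0 ∧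
      ∀ a, eval p a = 0 → PowerSeries.constantCoeff (φ a) = 0 := by
  let A := MvPolynomial (Fin n) ℂ ⧸ P
  let π : MvPolynomial (Fin n) ℂ →ₐ[ℂ] A := Ideal.Quotient.mkₐ ℂ P
  have hπ : Function.Surjective π := Ideal.Quotient.mk_surjective
  have hkπ : ∀ a, π a = 0 ↔ a ∈ P := fun a => Ideal.Quotient.eq_zero_iff_mem
  have : Algebra.FiniteType ℂ A := Algebra.FiniteType.of_surjective π hπ
  let m : Ideal (MvPolynomial (Fin n) ℂ) := RingHom.ker (eval p)
  have hm : m.IsMaximal := aux_ker_eval_isMaximal p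
  let M : Ideal A := m.map π
  have hcomap : M.comap π = m := by
    rw [Ideal.comap_map_of_surjective π hπ, sup_eq_left]
    intro a ha
    exact hPm ((hkπ a).mp ha)
  have hM : M.IsMaximal :=
    (Ideal.map_eq_top_or_isMaximal_of_surjective π hπ hm).resolve_left fun htop => hm.ne_top (by
      rw [← hcomap]
      change Ideal.comap π (Ideal.map π m) = ⊤
      rw [htop, Ideal.comap_top])
  obtain ⟨φ, hφ, hφ0⟩ := aux_curve (FractionRing A) M (π g) (Ideal.mem_map_of_mem π hgm)
    (fun h0 => hgP ((hkπ g).mp h0)) (fun Q hQ hgQ hQM => by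
      have h1 := h (Q.comap π) (Ideal.comap_isPrime π Q) (fun a ha => by
        rw [Ideal.mem_comap, (hkπ a).mpr ha]; exact Q.zero_mem) hgQ (by
          change _ ≤ m
          rw [← hcomap]; exact Ideal.comap_mono hQM)
      rw [← Ideal.map_comap_of_surjective π hπ Q, h1])
  refine ⟨φ.comp π, fun a ha => ?_, fun h0 => hgP ?_, fun a ha => ?_⟩
  · rw [AlgHom.comp_apply, (hkπ a).mpr ha, map_zero]
  · rw [AlgHom.comp_apply, map_eq_zero_iff φ hφ] at h0
    exact (hkπ g).mp h0
  · exact hφ0 _ (Ideal.mem_map_of_mem π ha)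

theorem aux_chain {n : ℕ} (φ : MvPolynomial (Fin n) ℂ →ₐ[ℂ] PowerSeries ℂ)
    (h : MvPolynomial (Fin n) ℂ) :
    PowerSeries.derivative ℂ (φ h) =
      ∑ j, φ (pderiv j h) * PowerSeries.derivative ℂ (φ (X j)) := by
  induction h using MvPolynomial.induction_on with
  | C a =>
    rw [← MvPolynomial.algebraMap_eq, AlgHom.commutes]
    simp
  | add a b ha hb => simp only [map_add, ha, hb, add_mul, Finset.sum_add_distrib]
  | mul_X a i ha =>
    have h1 : ∀ j, φ (pderiv j (a * X i)) =
        φ a * (if j = i then 1 else 0) + φ (X i) * φ (pderiv j a) := by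
      intro j
      rw [Derivation.leibniz, pderiv_X]
      by_cases hj : j = i
      · subst hj
        simp
      · simp [hj, Ne.symm hj]
    simp only [h1, add_mul, Finset.sum_add_distrib, mul_ite, mul_one, mul_zero, ite_mul, zero_mul,
      Finset.sum_ite_eq', Finset.mem_univ, if_true]
    rw [map_mul, Derivation.leibniz, ha, smul_eq_mul, smul_eq_mul, Finset.mul_sum]
    congr 1
    refine Finset.sum_congr rfl fun j _ => ?_
    ring

theorem aux_order (u : PowerSeries ℂ) (hu : u ≠ 0) (hc : PowerSeries.constantCoeff u = 0)
    (hd : u ∣ PowerSeries.derivative ℂ u) : False := by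
  have h1 := (PowerSeries.X_pow_order_dvd (φ := u)).trans hd
  have h2 := PowerSeries.coeff_order hu
  rw [PowerSeries.X_pow_dvd_iff] at h1
  rcases hk : u.order.toNat with _ | k
  · rw [hk, PowerSeries.coeff_zero_eq_constantCoeff_apply] at h2
    exact h2 hc
  · have h3 := h1 k (by omega)
    rw [PowerSeries.coeff_derivative] at h3
    rw [hk] at h2
    rcases mul_eq_zero.mp h3 with h4 | h4
    · exact h2 h4
    · exact Nat.cast_add_one_ne_zero k h4

theorem aux_contra {n : ℕ} (f : Fin n → MvPolynomial (Fin n) ℂ) (p : Fin n → ℂ)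
    (hzero : ∀ i, eval p (f i) = 0)
    (hiso : ∀ Q : Ideal (MvPolynomial (Fin n) ℂ), Q.IsPrime → (∀ i, f i ∈ Q) →
      Q ≤ RingHom.ker (eval p) → Q = RingHom.ker (eval p))
    (lam : Fin n → ℂ) (hlam : lam ≠ 0)
    (hs : ∀ j, ∃ s, eval p s ≠ 0 ∧
      s * pderiv j (∑ i, C (lam i) * f i) ∈ Ideal.span (Set.range f)) : False := by
  classical
  obtain ⟨i0, hi0⟩ := Function.ne_iff.mp hlam
  have hi0 : lam i0 ≠ 0 := hi0
  set g := ∑ i, C (lam i) * f i with hg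
  let S : Finset (MvPolynomial (Fin n) ℂ) := (Finset.univ.erase i0).image f
  let I' : Ideal (MvPolynomial (Fin n) ℂ) := Ideal.span (S : Set (MvPolynomial (Fin n) ℂ))
  have hfS : ∀ i, i ≠ i0 → f i ∈ I' := fun i hi =>
    Ideal.subset_span (Finset.mem_coe.mpr (Finset.mem_image_of_mem f (by simpa using hi)))
  have hI'm : I' ≤ RingHom.ker (eval p) := by
    rw [Ideal.span_le]
    intro x hx
    obtain ⟨i, _, rfl⟩ := Finset.mem_image.mp (Finset.mem_coe.mp hx)
    exact hzero i
  have hmmax := aux_ker_eval_isMaximal p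
  obtain ⟨P, hPmin, hPm⟩ := Ideal.exists_minimalPrimes_le hI'm
  have hPprime : P.IsPrime := hPmin.1.1
  have hI'P : I' ≤ P := hPmin.1.2
  have hne : P ≠ RingHom.ker (eval p) := by
    intro he
    have h1 := Ideal.height_le_card_of_mem_minimalPrimes_span_finset hPmin
    rw [he] at h1
    have h2 := (aux_height p).trans h1
    have h3 : n ≤ S.card := by exact_mod_cast h2
    have h4 : S.card ≤ n - 1 := Finset.card_image_le.trans (by simp)
    have := i0.pos
    omega
  have hfg : ∀ Q : Ideal (MvPolynomial (Fin n) ℂ), P ≤ Q → g ∈ Q → ∀ i, f i ∈ Q := by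
    intro Q hPQ hgQ i
    have hother : ∀ i, i ≠ i0 → f i ∈ Q := fun i hi => hPQ (hI'P (hfS i hi))
    by_cases hi : i = i0
    · subst hi
      rw [hg, ← Finset.add_sum_erase _ _ (Finset.mem_univ i)] at hgQ
      have h1 : ∑ x ∈ Finset.univ.erase i, C (lam x) * f x ∈ Q :=
        Q.sum_mem fun x hx => Q.mul_mem_left _ (hother x (Finset.ne_of_mem_erase hx))
      have h2 := (Q.add_mem_iff_left h1).mp hgQ
      have h3 : f i = C (lam i)⁻¹ * (C (lam i) * f i) := by
        rw [← mul_assoc, ← C_mul, inv_mul_cancel₀ hi0, C_1, one_mul]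
      rw [h3]
      exact Q.mul_mem_left _ h2
    · exact hother i hi
  have hgm : eval p g = 0 := by simp [hg, hzero]
  obtain ⟨φ, hφP, hφg, hφ0⟩ := aux_curve2 p P hPm g hgm
    (fun hgP => hne (hiso P hPprime (hfg P le_rfl hgP) hPm))
    (fun Q hQ hPQ hgQ hQm => hiso Q hQ (hfg Q hPQ hgQ) hQm)
  -- the image of the ideal
  let J : Ideal (MvPolynomial (Fin n) ℂ) := (Ideal.span {φ g}).comap φ
  have hPJ : P ≤ J := fun a ha => by
    rw [Ideal.mem_comap, hφP a ha]; exact Ideal.zero_mem _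
  have hgJ : g ∈ J := Ideal.mem_span_singleton_self (φ g)
  have hIJ : Ideal.span (Set.range f) ≤ J := by
    rw [Ideal.span_le]
    rintro _ ⟨i, rfl⟩
    exact hfg J hPJ hgJ i
  refine aux_order (φ g) hφg (hφ0 g hgm) ?_
  rw [aux_chain]
  refine Finset.dvd_sum fun j _ => Dvd.dvd.mul_right ?_ _
  obtain ⟨s, hs0, hsI⟩ := hs j
  have h1 : φ g ∣ φ s * φ (pderiv j g) := by
    rw [← map_mul]
    exact Ideal.mem_span_singleton.mp (hIJ hsI)
  have hunit : IsUnit (φ s) := by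
    rw [PowerSeries.isUnit_iff_constantCoeff]
    have h2 := hφ0 (s - C (eval p s)) (by simp)
    have h3 : φ (C (eval p s)) = PowerSeries.C (eval p s) := by
      rw [← MvPolynomial.algebraMap_eq, AlgHom.commutes]; rfl
    rw [map_sub, map_sub, h3, PowerSeries.constantCoeff_C, sub_eq_zero] at h2
    rw [h2]
    exact IsUnit.mk0 _ hs0
  exact (hunit.dvd_mul_left).mp h1

theorem aux_maxIdealAt {n : ℕ} (H : Set (MvPolynomial (Fin n) ℂ)) (p : Fin n → ℂ)
    (hH : ∀ h ∈ H, eval p h = 0) :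
    (maxIdealAt H p).comap (Ideal.Quotient.mk (Ideal.span H)) = RingHom.ker (eval p) ∧
      (maxIdealAt H p).IsMaximal := by
  have hm := aux_ker_eval_isMaximal p
  have hπ : Function.Surjective (Ideal.Quotient.mk (Ideal.span H)) := Ideal.Quotient.mk_surjective
  have hcomap : (maxIdealAt H p).comap (Ideal.Quotient.mk (Ideal.span H)) =
      RingHom.ker (eval p) := by
    rw [maxIdealAt, aux_ker_eval, Ideal.comap_map_of_surjective _ hπ, ← RingHom.ker_eq_comap_bot,
      Ideal.mk_ker, sup_eq_left, Ideal.span_le]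
    exact hH
  refine ⟨hcomap, ?_⟩
  have hmap : maxIdealAt H p = Ideal.map (Ideal.Quotient.mk (Ideal.span H))
      (RingHom.ker (eval p)) := by
    rw [maxIdealAt, aux_ker_eval]
  rw [hmap]
  refine (Ideal.map_eq_top_or_isMaximal_of_surjective _ hπ hm).resolve_left fun htop =>
    hm.ne_top ?_
  rw [← hcomap, hmap, htop, Ideal.comap_top]

theorem aux_loc_lt {k A B : Type*} [Field k] [CommRing A] [CommRing B] [Algebra k A] [Algebra k B]
    (π : A →ₐ[k] B) (hπ : Function.Surjective π) (I : Ideal A) (J : Ideal B) [I.IsPrime]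
    [J.IsPrime] (hIJ : I = J.comap π) [hfin : Module.Finite k (Localization.AtPrime I)]
    (hle : Module.finrank k (Localization.AtPrime I) ≤ Module.finrank k (Localization.AtPrime J))
    (a : A) (ha : π a = 0) : ∃ s ∉ I, s * a = 0 := by
  let Φ : Localization.AtPrime I →ₐ[k] Localization.AtPrime J := Localization.localAlgHom I J π hIJ
  have hsurj : Function.Surjective Φ := by
    subst hIJ
    exact RingHom.surjectiveOnStalks_of_surjective (f := π.toRingHom) hπ J inferInstance
  have hfin' : Module.Finite k (Localization.AtPrime J) :=
    Module.Finite.of_surjective Φ.toLinearMap hsurj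
  have heq := le_antisymm hle (LinearMap.finrank_le_finrank_of_surjective (f := Φ.toLinearMap) hsurj)
  have hinj : Function.Injective Φ :=
    (LinearMap.injective_iff_surjective_of_finrank_eq_finrank heq (f := Φ.toLinearMap)).mpr hsurj
  have h0 : Φ (algebraMap A (Localization.AtPrime I) a) = 0 := by
    have : Φ (algebraMap A (Localization.AtPrime I) a) = algebraMap B (Localization.AtPrime J) (π a) :=
      Localization.localRingHom_to_map I J π.toRingHom hIJ a
    rw [this, ha, map_zero]
  have h1 : algebraMap A (Localization.AtPrime I) a = 0 := hinj (by rw [h0, map_zero])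
  obtain ⟨s, hs⟩ := (IsLocalization.map_eq_zero_iff I.primeCompl _ a).mp h1
  exact ⟨s, s.2, hs⟩

/-- Let `F = {f₁,…,fₙ} ⊂ ℂ[x₁,…,xₙ]` have an isolated singular zero
`p ∈ ℂⁿ` and let `λ ∈ ℂⁿ` be a nonzero left null vector of the Jacobian, `λ·J(F)(p) = 0`.
For `G′ = {λ₁ ∂f₁/∂x_j + ⋯ + λₙ ∂fₙ/∂x_j : j = 1,…,n}`, the multiplicity of `p` as a zero
of `F ∪ G′` is strictly smaller than the multiplicity of `p` as a zero of `F`. -/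
theorem multiplicity_lt_of_deflation_left_kernel {n : ℕ}
    (f : Fin n → MvPolynomial (Fin n) ℂ) (p : Fin n → ℂ)
    (hzero : ∀ i, eval p (f i) = 0)
    (hisolated : ∃ ε > 0, ∀ y : Fin n → ℂ, dist y p < ε → (∀ i, eval y (f i) = 0) → y = p)
    (hsingular : jacRank f p < n)
    (lam : Fin n → ℂ) (hlam : lam ≠ 0)
    (hker : ∀ j : Fin n, ∑ i : Fin n, lam i * eval p (pderiv j (f i)) = 0) :
    zeroMultiplicity
        (Set.range f ∪
          Set.range fun j : Fin n => ∑ i : Fin n, C (lam i) * pderiv j (f i)) p <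
      zeroMultiplicity (Set.range f) p := by
  classical
  obtain ⟨ε, hε, hisol⟩ := hisolated
  have hiso : ∀ Q : Ideal (MvPolynomial (Fin n) ℂ), Q.IsPrime → (∀ i, f i ∈ Q) →
      Q ≤ RingHom.ker (eval p) → Q = RingHom.ker (eval p) := by
    intro Q hQ hfQ hQm
    by_contra hne
    obtain ⟨y, hy, hyQ, hyp⟩ := aux_not_isolated Q p (lt_of_le_of_ne hQm hne) ε hε
    exact hyp (hisol y hy fun i => hyQ _ (hfQ i))
  have hpd : ∀ j, pderiv j (∑ i, C (lam i) * f i) = ∑ i, C (lam i) * pderiv j (f i) := by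
    intro j
    rw [map_sum]
    refine Finset.sum_congr rfl fun i _ => ?_
    rw [pderiv_C_mul, C_mul']
  set H : Set (MvPolynomial (Fin n) ℂ) := Set.range f with hH
  set H' : Set (MvPolynomial (Fin n) ℂ) := Set.range f ∪
    Set.range fun j : Fin n => ∑ i : Fin n, C (lam i) * pderiv j (f i) with hH'
  have hHp : ∀ h ∈ H, eval p h = 0 := by
    rintro _ ⟨i, rfl⟩
    exact hzero i
  have hHp' : ∀ h ∈ H', eval p h = 0 := by
    rintro _ (⟨i, rfl⟩ | ⟨j, rfl⟩)
    · exact hzero i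
    · simpa using hker j
  obtain ⟨hc, hmax⟩ := aux_maxIdealAt H p hHp
  obtain ⟨hc', hmax'⟩ := aux_maxIdealAt H' p hHp'
  have hpr : (maxIdealAt H p).IsPrime := hmax.isPrime
  have hpr' : (maxIdealAt H' p).IsPrime := hmax'.isPrime
  have hle : Ideal.span H ≤ Ideal.span H' := Ideal.span_mono Set.subset_union_left
  rw [zeroMultiplicity, dif_pos hpr', zeroMultiplicity, dif_pos hpr]
  by_contra hcon
  rw [not_lt] at hcon
  have hfin : Module.Finite ℂ (Localization.AtPrime (maxIdealAt H p)) := by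
    refine aux_finite _ fun Q hQ hQle => ?_
    have h1 := hiso (Q.comap (Ideal.Quotient.mk (Ideal.span H))) inferInstance (fun i => by
      have h0 : Ideal.Quotient.mk (Ideal.span H) (f i) = 0 :=
        Ideal.Quotient.eq_zero_iff_mem.mpr (Ideal.subset_span ⟨i, rfl⟩)
      rw [Ideal.mem_comap, h0]
      exact Q.zero_mem) (by rw [← hc]; exact Ideal.comap_mono hQle)
    rw [← hc] at h1
    exact Ideal.comap_injective_of_surjective _ Ideal.Quotient.mk_surjective h1
  let π : (MvPolynomial (Fin n) ℂ ⧸ Ideal.span H) →ₐ[ℂ] (MvPolynomial (Fin n) ℂ ⧸ Ideal.span H') :=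
    Ideal.Quotient.factorₐ ℂ hle
  have hπ : Function.Surjective π := Ideal.Quotient.factor_surjective hle
  have hIJ : maxIdealAt H p = (maxIdealAt H' p).comap π := by
    apply Ideal.comap_injective_of_surjective _ (Ideal.Quotient.mk_surjective (I := Ideal.span H))
    rw [hc, ← hc']
    rfl
  refine aux_contra f p hzero hiso lam hlam fun j => ?_
  obtain ⟨s, hs, hsa⟩ := aux_loc_lt π hπ _ _ hIJ hcon
    (Ideal.Quotient.mk (Ideal.span H) (pderiv j (∑ i, C (lam i) * f i))) (by
      change Ideal.Quotient.mk (Ideal.span H') _ = 0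
      rw [Ideal.Quotient.eq_zero_iff_mem, hpd]
      exact Ideal.subset_span (Or.inr ⟨j, rfl⟩))
  obtain ⟨s, rfl⟩ := Ideal.Quotient.mk_surjective s
  refine ⟨s, fun h0 => hs ?_, ?_⟩
  · have : s ∈ RingHom.ker (eval p) := h0
    rw [← hc] at this
    exact this
  · rw [← map_mul, Ideal.Quotient.eq_zero_iff_mem] at hsa
    exact hsa
end
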